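/- arXiv:1802.03437 — 3 statements merged into one kernel-verified Lean document; each statement's English description precedes it below -/
import Mathlib

section
/- Let Q be a primitive positive-definite quaternary integer-valued quadratic form with level N(Q), and let p be an odd prime with p ∤ N(Q). Then for every positive integer n, the local density β_p(Q;n) exists and satisfies β_p(Q;n) ≥ 1 − 1/p. -/
open scoped BigOperators

/-- Value of the quadratic form with Gram matrix `A` (symmetric, even diagonal)
over any commutative ring: `Q(x) = ∑ (aᵢᵢ/2) xᵢ² + ∑_{i<j} aᵢⱼ xᵢ xⱼ`. -/
def Qval {R : Type*} [CommRing R] (A : Matrix (Fin 4) (Fin 4) ℤ) (x : Fin 4 → R) : R :=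
  (∑ i, ((A i i / 2 : ℤ) : R) * x i ^ 2) +
    ∑ i, ∑ j ∈ Finset.Ioi i, ((A i j : ℤ) : R) * (x i * x j)

/-- `A` is the Gram matrix of an integer-valued quadratic form. -/
def IsGram (A : Matrix (Fin 4) (Fin 4) ℤ) : Prop :=
  A.IsSymm ∧ ∀ i, 2 ∣ A i i

/-- The form is primitive: the gcd of its coefficients is 1. -/
def IsPrimitiveQF (A : Matrix (Fin 4) (Fin 4) ℤ) : Prop :=
  ∀ d : ℤ, (∀ i, d ∣ A i i / 2) → (∀ i j, i ≠ j → d ∣ A i j) → IsUnit d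

/-- The form is positive definite. -/
def PosDefQF (A : Matrix (Fin 4) (Fin 4) ℤ) : Prop :=
  (A.map (Int.cast : ℤ → ℝ)).PosDef

/-- `N` is the level of the form with Gram matrix `A`: the smallest positive integer
such that `N • A⁻¹` has integer entries and even diagonal. -/
def IsLevel (A : Matrix (Fin 4) (Fin 4) ℤ) (N : ℕ) : Prop :=
  0 < N ∧
    (∃ B : Matrix (Fin 4) (Fin 4) ℤ,
      B.map (Int.cast : ℤ → ℚ) = (N : ℚ) • (A.map (Int.cast : ℤ → ℚ))⁻¹ ∧ ∀ i, 2 ∣ B i i) ∧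
    ∀ M : ℕ, 0 < M →
      (∃ B : Matrix (Fin 4) (Fin 4) ℤ,
        B.map (Int.cast : ℤ → ℚ) = (M : ℚ) • (A.map (Int.cast : ℤ → ℚ))⁻¹ ∧ ∀ i, 2 ∣ B i i) →
      N ≤ M

/-- `n` is represented by the form over `ℤ`. -/
def Represented (A : Matrix (Fin 4) (Fin 4) ℤ) (n : ℕ) : Prop :=
  ∃ x : Fin 4 → ℤ, Qval A x = (n : ℤ)

/-- `n` is locally represented: representable over `ℤ_p` for every prime `p`. -/
def LocallyRepresented (A : Matrix (Fin 4) (Fin 4) ℤ) (n : ℕ) : Prop :=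
  ∀ (p : ℕ) [Fact p.Prime], ∃ x : Fin 4 → ℤ_[p], Qval A x = (n : ℤ_[p])

/-- Number of solutions of `Q(x) ≡ n mod p^k`. -/
noncomputable def localCount (A : Matrix (Fin 4) (Fin 4) ℤ) (p n k : ℕ) : ℕ :=
  Nat.card {x : Fin 4 → ZMod (p ^ k) // Qval A x = (n : ZMod (p ^ k))}

/-- The local density `β_p(Q;n)` exists and is at least `c`. -/
def DensityBound (A : Matrix (Fin 4) (Fin 4) ℤ) (p n : ℕ) (c : ℝ) : Prop :=
  ∃ β : ℝ,
    Filter.Tendsto (fun k => (localCount A p n k : ℝ) / (p : ℝ) ^ (3 * k))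
      Filter.atTop (nhds β) ∧ c ≤ β


namespace LDU

/-- Polarization identity for the form. -/
lemma Qval_add {R : Type*} [CommRing R] (A : Matrix (Fin 4) (Fin 4) ℤ) (hA : IsGram A)
    (x y : Fin 4 → R) :
    Qval A (x + y) = Qval A x + Qval A y + x ⬝ᵥ ((A.map (Int.cast : ℤ → R)).mulVec y) := by
  obtain ⟨hs, hd⟩ := hA
  have e : ∀ i, ((A i i : ℤ) : R) = 2 * ((A i i / 2 : ℤ) : R) := by
    intro i
    have := Int.mul_ediv_cancel' (hd i)
    conv_lhs => rw [← this]
    push_cast; rfl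
  have h10 := hs.apply 0 1
  have h20 := hs.apply 0 2
  have h30 := hs.apply 0 3
  have h21 := hs.apply 1 2
  have h31 := hs.apply 1 3
  have h32 := hs.apply 2 3
  have i0 : Finset.Ioi (0 : Fin 4) = {1, 2, 3} := by decide
  have i1 : Finset.Ioi (1 : Fin 4) = {2, 3} := by decide
  have i2 : Finset.Ioi (2 : Fin 4) = {3} := by decide
  have i3 : Finset.Ioi (3 : Fin 4) = ∅ := by decide
  simp only [Qval, dotProduct, Matrix.mulVec, Fin.sum_univ_four, i0, i1, i2, i3, Matrix.map_apply,
    h10, h20, h30, h21, h31, h32, e, Pi.add_apply]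
  simp
  ring

/-- Reduction is compatible with the form. -/
lemma Qval_map {R S : Type*} [CommRing R] [CommRing S] (f : R →+* S)
    (A : Matrix (Fin 4) (Fin 4) ℤ) (x : Fin 4 → R) :
    f (Qval A x) = Qval A (fun i => f (x i)) := by
  simp [Qval]

/-- The quadratic Gauss sum in four variables. -/
noncomputable def gaussS (A : Matrix (Fin 4) (Fin 4) ℤ) (m : ℕ) [NeZero m] (t : ZMod m) : ℂ :=
  ∑ x : Fin 4 → ZMod m, ZMod.stdAddChar (t * Qval A x)

lemma linear_sum (m : ℕ) [NeZero m] (v : Fin 4 → ZMod m) :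
    ∑ x : Fin 4 → ZMod m, (ZMod.stdAddChar (x ⬝ᵥ v) : ℂ) = if v = 0 then (m : ℂ) ^ 4 else 0 := by
  classical
  let L : (Fin 4 → ZMod m) →+ ZMod m :=
    { toFun := fun x => x ⬝ᵥ v, map_zero' := by simp, map_add' := fun x y => by simp [add_dotProduct] }
  have h := AddChar.sum_eq_ite ((ZMod.stdAddChar (N := m)).compAddMonoidHom L)
  have h2 : ((ZMod.stdAddChar (N := m)).compAddMonoidHom L = 0) ↔ v = 0 := by
    constructor
    · intro h0
      ext1 i
      have h1 := DFunLike.congr_fun h0 (Pi.single i 1)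
      simp only [AddChar.compAddMonoidHom_apply, AddChar.zero_apply] at h1
      have h3 := ((ZMod.isPrimitive_stdAddChar m).zmod_char_eq_one_iff m _).1 h1
      simpa [L] using h3
    · rintro rfl
      ext x
      simp [L]
  have h4 : (Fintype.card (Fin 4 → ZMod m) : ℂ) = (m : ℂ) ^ 4 := by simp [ZMod.card]
  simp only [h2, h4] at h
  simpa [L] using h

lemma gaussS_norm (A : Matrix (Fin 4) (Fin 4) ℤ) (hA : IsGram A) (m : ℕ) [NeZero m]
    (hdet : IsUnit ((A.map (Int.cast : ℤ → ZMod m)).det)) (t : ZMod m) (ht : IsUnit t) :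
    ‖gaussS A m t‖ = (m : ℝ) ^ 2 := by
  classical
  have key : gaussS A m t * (starRingEnd ℂ) (gaussS A m t) = (m : ℂ) ^ 4 := by
    have h1 : gaussS A m t * (starRingEnd ℂ) (gaussS A m t) =
        ∑ x : Fin 4 → ZMod m, ∑ y : Fin 4 → ZMod m, (ZMod.stdAddChar (t * Qval A y) : ℂ) *
          ZMod.stdAddChar (x ⬝ᵥ (t • (A.map (Int.cast : ℤ → ZMod m)).mulVec y)) := by
      rw [mul_comm]
      unfold gaussS
      rw [map_sum, Finset.sum_mul]
      refine Finset.sum_congr rfl fun x _ => ?_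
      rw [Finset.mul_sum, ← Equiv.sum_comp (Equiv.addLeft x)]
      refine Finset.sum_congr rfl fun y _ => ?_
      rw [← AddChar.map_neg_eq_conj, ← AddChar.map_add_eq_mul, ← AddChar.map_add_eq_mul]
      congr 1
      simp only [Equiv.coe_addLeft, Qval_add A hA, dotProduct_smul, smul_eq_mul]
      ring
    rw [h1, Finset.sum_comm]
    simp_rw [← Finset.mul_sum, linear_sum]
    have h2 : ∀ y : Fin 4 → ZMod m,
        t • (A.map (Int.cast : ℤ → ZMod m)).mulVec y = 0 ↔ y = 0 := by
      intro y
      rw [ht.smul_eq_zero]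
      constructor
      · intro h
        have := Matrix.mulVec_injective_of_isUnit ((Matrix.isUnit_iff_isUnit_det _).2 hdet)
        exact this (by simpa using h)
      · rintro rfl; simp
    simp only [h2]
    simp [Qval]
  have h5 : ((‖gaussS A m t‖ ^ 2 : ℝ) : ℂ) = (m : ℂ) ^ 4 := by
    rw [← key, Complex.mul_conj, Complex.normSq_eq_norm_sq]
  have h6 : ‖gaussS A m t‖ ^ 2 = ((m : ℝ) ^ 2) ^ 2 := by
    have : ‖gaussS A m t‖ ^ 2 = (m : ℝ) ^ 4 := by exact_mod_cast h5
    rw [this]; ring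
  exact (pow_left_inj₀ (norm_nonneg _) (by positivity) two_ne_zero).1 h6

lemma nonunit_sum (p k : ℕ) [hp : Fact p.Prime] (c : ZMod (p ^ (k + 1))) :
    ∑ t : ZMod (p ^ (k + 1)) with ¬ IsUnit t, (ZMod.stdAddChar (t * c) : ℂ) =
      if ZMod.castHom (pow_dvd_pow p k.le_succ) (ZMod (p ^ k)) c = 0 then (p : ℂ) ^ k else 0 := by
  classical
  have hpos := hp.out.pos
  have h := AddChar.sum_mulShift (ZMod.castHom (pow_dvd_pow p k.le_succ) (ZMod (p ^ k)) c)
    (ZMod.isPrimitive_stdAddChar (p ^ k))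
  rw [ZMod.card] at h
  push_cast at h
  rw [← h]
  symm
  refine Finset.sum_bij (fun j _ => ((p * j.val : ℕ) : ZMod (p ^ (k + 1)))) ?_ ?_ ?_ ?_
  · intro j _
    simp only [Finset.mem_filter, Finset.mem_univ, true_and]
    rw [ZMod.isUnit_iff_coprime]
    intro hc
    have := Nat.Coprime.coprime_dvd_left (Dvd.intro _ rfl : p ∣ p * j.val) hc
    rw [Nat.coprime_pow_right_iff (Nat.succ_pos k)] at this
    exact hp.out.one_lt.ne' ((Nat.coprime_self p).1 this)
  · intro a _ b _ hab
    have la : p * a.val < p ^ (k + 1) := by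
      rw [pow_succ']; exact Nat.mul_lt_mul_of_pos_left (ZMod.val_lt a) hpos
    have lb : p * b.val < p ^ (k + 1) := by
      rw [pow_succ']; exact Nat.mul_lt_mul_of_pos_left (ZMod.val_lt b) hpos
    have := congrArg ZMod.val hab
    rw [ZMod.val_natCast_of_lt la, ZMod.val_natCast_of_lt lb] at this
    exact ZMod.val_injective _ (Nat.eq_of_mul_eq_mul_left hpos this)
  · intro t ht
    simp only [Finset.mem_filter, Finset.mem_univ, true_and] at ht
    have e : ((t.val : ℕ) : ZMod (p ^ (k + 1))) = t := ZMod.natCast_zmod_val t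
    rw [← e, ZMod.isUnit_iff_coprime, Nat.coprime_pow_right_iff (Nat.succ_pos k), Nat.coprime_comm,
      hp.out.coprime_iff_not_dvd, not_not] at ht
    obtain ⟨j, hj⟩ := ht
    have hlt : j < p ^ k := by
      have := ZMod.val_lt t
      rw [hj, pow_succ'] at this
      exact Nat.lt_of_mul_lt_mul_left this
    refine ⟨(j : ZMod (p ^ k)), Finset.mem_univ _, ?_⟩
    rw [ZMod.val_natCast_of_lt hlt, ← hj, e]
  · intro j _
    have ej : j = ((j.val : ℤ) : ZMod (p ^ k)) := by simp
    have ec : c = ((c.val : ℤ) : ZMod (p ^ (k + 1))) := by simp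
    have e1 : j * ZMod.castHom (pow_dvd_pow p k.le_succ) (ZMod (p ^ k)) c =
        (((j.val : ℤ) * (c.val : ℤ) : ℤ) : ZMod (p ^ k)) := by
      conv_lhs => rw [ec, ej]
      rw [map_intCast]; push_cast; rfl
    have e2 : ((p * j.val : ℕ) : ZMod (p ^ (k + 1))) * c =
        (((p : ℤ) * (j.val : ℤ) * (c.val : ℤ) : ℤ) : ZMod (p ^ (k + 1))) := by
      conv_lhs => rw [ec]
      push_cast; rfl
    rw [e1, e2, ZMod.stdAddChar_coe, ZMod.stdAddChar_coe]
    congr 1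
    have : (p : ℂ) ≠ 0 := by exact_mod_cast hpos.ne'
    push_cast
    field_simp
    ring

lemma fiber_sum {G H : Type*} [AddCommGroup G] [AddCommGroup H] [Fintype G] [Fintype H]
    (f : G →+ H) (hf : Function.Surjective f) (g : H → ℂ) :
    (Fintype.card H : ℂ) * ∑ x, g (f x) = Fintype.card G * ∑ h, g h := by
  classical
  have hc : ∀ h : H, (Finset.univ.filter fun x => f x = h).card =
      (Finset.univ.filter fun x => f x = 0).card := fun h =>
    AddMonoidHom.card_fiber_eq_of_mem_range f (hf h) (hf 0)
  have h1 : ∀ g : H → ℂ, ∑ x, g (f x) =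
      ((Finset.univ.filter fun x => f x = 0).card : ℂ) * ∑ h, g h := by
    intro g
    rw [← Finset.sum_fiberwise Finset.univ f (fun x => g (f x)), Finset.mul_sum]
    refine Finset.sum_congr rfl fun h _ => ?_
    rw [← hc h, Finset.sum_congr rfl (g := fun _ => g h), Finset.sum_const, nsmul_eq_mul]
    intro x hx
    rw [(Finset.mem_filter.1 hx).2]
  have h2 := h1 (fun _ => 1)
  simp only [Finset.sum_const, Finset.card_univ, nsmul_eq_mul, mul_one] at h2
  rw [h1 g, h2]; ring

lemma localCount_eq (A : Matrix (Fin 4) (Fin 4) ℤ) (p n k : ℕ) [hp : Fact p.Prime] :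
    (localCount A p n k : ℂ) = ∑ x : Fin 4 → ZMod (p ^ k), if Qval A x - n = 0 then (1 : ℂ) else 0 := by
  classical
  unfold localCount
  rw [Nat.card_eq_fintype_card, Fintype.card_subtype]
  simp [sub_eq_zero]

lemma recursion (A : Matrix (Fin 4) (Fin 4) ℤ) (p n k : ℕ) [hp : Fact p.Prime] :
    (p : ℂ) ^ (k + 1) * localCount A p n (k + 1) = (p : ℂ) ^ (k + 4) * localCount A p n k +
      ∑ t : ZMod (p ^ (k + 1)) with IsUnit t,
        (ZMod.stdAddChar (-(t * (n : ZMod (p ^ (k + 1))))) : ℂ) * gaussS A (p ^ (k + 1)) t := by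
  classical
  have hp0 : (p : ℂ) ≠ 0 := by exact_mod_cast hp.out.pos.ne'
  let π := ZMod.castHom (pow_dvd_pow p k.le_succ) (ZMod (p ^ k))
  have hπ : Function.Surjective π := ZMod.castHom_surjective _
  have h1 : (p : ℂ) ^ (k + 1) * localCount A p n (k + 1) =
      ∑ x : Fin 4 → ZMod (p ^ (k + 1)), ∑ t : ZMod (p ^ (k + 1)),
        (ZMod.stdAddChar (t * (Qval A x - (n : ZMod (p ^ (k + 1))))) : ℂ) := by
    rw [localCount_eq, Finset.mul_sum]
    refine Finset.sum_congr rfl fun x _ => ?_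
    rw [AddChar.sum_mulShift _ (ZMod.isPrimitive_stdAddChar (p ^ (k + 1))), ZMod.card]
    push_cast
    simp
  have h2 : ∑ x : Fin 4 → ZMod (p ^ (k + 1)), ∑ t : ZMod (p ^ (k + 1)) with ¬ IsUnit t,
        (ZMod.stdAddChar (t * (Qval A x - (n : ZMod (p ^ (k + 1))))) : ℂ) = (p : ℂ) ^ (k + 4) * localCount A p n k := by
    simp_rw [nonunit_sum]
    let f : (Fin 4 → ZMod (p ^ (k + 1))) →+ (Fin 4 → ZMod (p ^ k)) :=
      { toFun := fun x i => π (x i), map_zero' := by ext; simp, map_add' := fun x y => by ext; simp }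
    have hf : Function.Surjective f := by
      intro y
      choose x hx using fun i => hπ (y i)
      exact ⟨x, funext hx⟩
    have h3 := fiber_sum f hf (fun y => if Qval A y - n = 0 then (1 : ℂ) else 0)
    rw [← localCount_eq] at h3
    have h4 : ∀ x : Fin 4 → ZMod (p ^ (k + 1)), π (Qval A x - n) = Qval A (f x) - n := by
      intro x
      rw [map_sub, map_natCast, Qval_map]
      rfl
    have h5 : ∀ x : Fin 4 → ZMod (p ^ (k + 1)),
        (if π (Qval A x - n) = 0 then (p : ℂ) ^ k else 0) =
        (p : ℂ) ^ k * if Qval A (f x) - n = 0 then (1 : ℂ) else 0 := by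
      intro x
      rw [h4]; simp
    change ∑ x : Fin 4 → ZMod (p ^ (k + 1)), (if π (Qval A x - n) = 0 then (p : ℂ) ^ k else 0) = _
    rw [Finset.sum_congr rfl fun x _ => h5 x, ← Finset.mul_sum]
    simp only [Fintype.card_pi, ZMod.card, Finset.prod_const, Finset.card_univ, Fintype.card_fin]
      at h3
    push_cast at h3
    have hne : ((p : ℂ) ^ k) ^ 4 ≠ 0 := by positivity
    apply mul_left_cancel₀ hne
    rw [mul_left_comm, h3]
    ring
  have h6 : ∑ t : ZMod (p ^ (k + 1)) with IsUnit t,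
        (ZMod.stdAddChar (-(t * (n : ZMod (p ^ (k + 1))))) : ℂ) * gaussS A (p ^ (k + 1)) t =
      ∑ x : Fin 4 → ZMod (p ^ (k + 1)), ∑ t : ZMod (p ^ (k + 1)) with IsUnit t,
        (ZMod.stdAddChar (t * (Qval A x - (n : ZMod (p ^ (k + 1))))) : ℂ) := by
    rw [Finset.sum_comm]
    refine Finset.sum_congr rfl fun t _ => ?_
    unfold gaussS
    rw [Finset.mul_sum]
    refine Finset.sum_congr rfl fun x _ => ?_
    rw [← AddChar.map_add_eq_mul]
    congr 1; ring
  rw [h1, ← h2, h6, ← Finset.sum_add_distrib]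
  refine Finset.sum_congr rfl fun x _ => ?_
  exact ((add_comm _ _).trans (Finset.sum_filter_add_sum_filter_not _ _ _)).symm

lemma card_units (p k : ℕ) [hp : Fact p.Prime] :
    (Finset.univ.filter fun t : ZMod (p ^ (k + 1)) => IsUnit t).card = p ^ k * (p - 1) := by
  classical
  rw [← Nat.totient_prime_pow_succ hp.out, ← ZMod.card_units_eq_totient, ← Finset.card_univ]
  symm
  refine Finset.card_bij (fun u _ => (u : ZMod (p ^ (k + 1)))) ?_ ?_ ?_
  · intro u _; simp
  · intro a _ b _ h; exact Units.ext h
  · intro b hb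
    obtain ⟨u, hu⟩ := (Finset.mem_filter.1 hb).2
    exact ⟨u, Finset.mem_univ _, hu⟩

lemma step_bound (A : Matrix (Fin 4) (Fin 4) ℤ) (hA : IsGram A) (p n k : ℕ) [hp : Fact p.Prime]
    (hdet : ¬ (p : ℤ) ∣ A.det) :
    |(localCount A p n (k + 1) : ℝ) / (p : ℝ) ^ (3 * (k + 1)) -
      (localCount A p n k : ℝ) / (p : ℝ) ^ (3 * k)| ≤ (1 - 1 / (p : ℝ)) * (1 / (p : ℝ)) ^ (k + 1) := by
  classical
  have hpR : (0 : ℝ) < p := by exact_mod_cast hp.out.pos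
  have hdet' : IsUnit ((A.map (Int.cast : ℤ → ZMod (p ^ (k + 1)))).det) := by
    have : (A.map (Int.cast : ℤ → ZMod (p ^ (k + 1)))).det =
        ((A.det : ℤ) : ZMod (p ^ (k + 1))) := by
      exact (Int.cast_det _).symm
    rw [this, ZMod.coe_int_isUnit_iff_isCoprime]
    push_cast
    exact IsCoprime.pow_left
      (((Nat.prime_iff_prime_int.1 hp.out).coprime_iff_not_dvd).2 hdet)
  have hb : ‖∑ t : ZMod (p ^ (k + 1)) with IsUnit t,
        (ZMod.stdAddChar (-(t * (n : ZMod (p ^ (k + 1))))) : ℂ) * gaussS A (p ^ (k + 1)) t‖ ≤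
      (p : ℝ) ^ k * (p - 1) * ((p : ℝ) ^ (k + 1)) ^ 2 := by
    refine (norm_sum_le_of_le _ (f := fun t : ZMod (p ^ (k + 1)) =>
      (ZMod.stdAddChar (-(t * (n : ZMod (p ^ (k + 1))))) : ℂ) * gaussS A (p ^ (k + 1)) t)
      (n := fun _ => ((p : ℝ) ^ (k + 1)) ^ 2) ?_).trans ?_
    · intro t ht
      rw [norm_mul, AddChar.norm_apply, one_mul,
        gaussS_norm A hA _ hdet' t (Finset.mem_filter.1 ht).2]
      push_cast; rfl
    · rw [Finset.sum_const, card_units, nsmul_eq_mul]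
      push_cast [Nat.cast_sub hp.out.one_lt.le]
      rfl
  have hr := recursion A p n k
  rw [← sub_eq_iff_eq_add'] at hr
  rw [← hr] at hb
  have hc : ‖(p : ℂ) ^ (k + 1) * localCount A p n (k + 1) - (p : ℂ) ^ (k + 4) * localCount A p n k‖
      = |(p : ℝ) ^ (k + 1) * localCount A p n (k + 1) - (p : ℝ) ^ (k + 4) * localCount A p n k| := by
    rw [← Real.norm_eq_abs, ← Complex.norm_real]
    push_cast; rfl
  rw [hc] at hb
  have e1 : (localCount A p n (k + 1) : ℝ) / (p : ℝ) ^ (3 * (k + 1)) -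
      (localCount A p n k : ℝ) / (p : ℝ) ^ (3 * k) =
      ((p : ℝ) ^ (k + 1) * localCount A p n (k + 1) - (p : ℝ) ^ (k + 4) * localCount A p n k) /
        (p : ℝ) ^ (4 * (k + 1)) := by
    field_simp
    ring
  rw [e1, abs_div, abs_of_pos (pow_pos hpR _), div_le_iff₀ (pow_pos hpR _)]
  refine hb.trans (le_of_eq ?_)
  rw [one_div, inv_pow]
  field_simp
  ring

lemma not_dvd_det (A : Matrix (Fin 4) (Fin 4) ℤ) (N p : ℕ) (hpd : PosDefQF A) (hN : IsLevel A N)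
    (hp : p.Prime) (hpN : ¬ p ∣ N) : ¬ (p : ℤ) ∣ A.det := by
  obtain ⟨-, ⟨B, hB, -⟩, -⟩ := hN
  have hd : A.det ≠ 0 := by
    have := hpd.det_pos
    have e : (A.map (Int.cast : ℤ → ℝ)).det = ((A.det : ℤ) : ℝ) := by
      exact (Int.cast_det _).symm
    rw [e] at this
    intro h; rw [h] at this; simp at this
  have eQ : ∀ M : Matrix (Fin 4) (Fin 4) ℤ, (M.map (Int.cast : ℤ → ℚ)).det = ((M.det : ℤ) : ℚ) := by
    intro M
    exact (Int.cast_det _).symm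
  have h1 := congrArg Matrix.det hB
  rw [Matrix.det_smul, Matrix.det_nonsing_inv, eQ, eQ, Ring.inverse_eq_inv', Fintype.card_fin] at h1
  have hdQ : (A.det : ℚ) ≠ 0 := by exact_mod_cast hd
  have h2 : (B.det : ℚ) * A.det = (N : ℚ) ^ 4 := by
    rw [h1]; field_simp
  have h3 : B.det * A.det = (N : ℤ) ^ 4 := by exact_mod_cast h2
  intro h
  have h4 : (p : ℤ) ∣ (N : ℤ) ^ 4 := h3 ▸ Dvd.dvd.mul_left h _
  exact hpN (by exact_mod_cast (Nat.prime_iff_prime_int.1 hp).dvd_of_dvd_pow h4)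

lemma limit_bound (a : ℕ → ℝ) (r : ℝ) (h1 : r < 1) (ha : a 0 = 1)
    (hs : ∀ k, |a (k + 1) - a k| ≤ (1 - r) * r ^ (k + 1)) :
    ∃ β, Filter.Tendsto a Filter.atTop (nhds β) ∧ 1 - r ≤ β := by
  have hd : ∀ k, dist (a k) (a (k + 1)) ≤ ((1 - r) * r) * r ^ k := by
    intro k
    rw [dist_comm, Real.dist_eq]
    refine (hs k).trans (le_of_eq (by ring))
  obtain ⟨β, hβ⟩ := cauchySeq_tendsto_of_complete (cauchySeq_of_le_geometric r _ h1 hd)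
  refine ⟨β, hβ, ?_⟩
  have h := dist_le_of_le_geometric_of_tendsto₀ r _ h1 hd hβ
  rw [ha, Real.dist_eq, mul_div_cancel_left₀ _ (by linarith : (1 - r) ≠ 0)] at h
  linarith [(abs_le.1 h).2]

end LDU

/-- If `p` is an odd prime not dividing the level, then `β_p(Q;n) ≥ 1 - 1/p`
for every positive integer `n`. -/
theorem local_density_unramified
    (A : Matrix (Fin 4) (Fin 4) ℤ) (N p : ℕ)
    (hA : IsGram A) (hprim : IsPrimitiveQF A) (hpd : PosDefQF A)
    (hN : IsLevel A N) (hp : p.Prime) (hodd : p ≠ 2) (hpN : ¬ p ∣ N) :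
    ∀ n : ℕ, 0 < n → DensityBound A p n (1 - 1 / (p : ℝ)) := by
  intro n _
  have : Fact p.Prime := ⟨hp⟩
  have hp1 : (1 : ℝ) < p := by exact_mod_cast hp.one_lt
  refine LDU.limit_bound _ (1 / (p : ℝ)) ?_ ?_
    (fun k => LDU.step_bound A hA p n k (LDU.not_dvd_det A N p hpd hN hp hpN))
  · rw [div_lt_one (by linarith)]; exact hp1
  · have : (localCount A p n 0 : ℂ) = 1 := by
      rw [LDU.localCount_eq]
      have hss : ∀ a : ZMod (p ^ 0), a = 0 := by
        rw [pow_zero]; intro a; exact Subsingleton.elim _ _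
      rw [Finset.sum_congr rfl fun x _ => if_pos (hss _)]
      rw [Finset.sum_const, Finset.card_univ, Fintype.card_pi]
      simp only [ZMod.card]
      simp
    have h2 : (localCount A p n 0 : ℝ) = 1 := by exact_mod_cast this
    simp [h2]
end

section
/- For every ε > 0 there exists a constant C = C(ε) > 0 such that for every positive-definite quaternary integer-valued quadratic form R with discriminant D(R) and every positive integer n, the number of representations satisfies r_R(n) ≤ C · ( n^(1+ε) · D(R)^(−1/4+ε) + n^(1/2) · (n·D(R))^ε ). -/
open scoped BigOperators

/-- The representation number `r_R(n) = #{x ∈ ℤ⁴ : R(x) = n}`. -/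
noncomputable def repCount (A : Matrix (Fin 4) (Fin 4) ℤ) (n : ℕ) : ℕ :=
  Nat.card {x : Fin 4 → ℤ // Qval A x = (n : ℤ)}


lemma dvd_cast {a b c : ℤ} (h : a ∣ b) (e : b = c) : a ∣ c := e ▸ h

lemma div_bound (ε : ℝ) (hε : 0 < ε) : ∃ K : ℝ, 1 ≤ K ∧ ∀ n : ℕ, n ≠ 0 →
    (n.divisors.card : ℝ) ≤ K * (n : ℝ) ^ ε := by
  have hl2 : 0 < Real.log 2 := Real.log_pos (by norm_num)
  obtain ⟨N, hN⟩ := exists_nat_ge ((2:ℝ) ^ (1 / ε))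
  set K : ℝ := max 1 (1 / (ε * Real.log 2)) with hK
  have hK1 : 1 ≤ K := le_max_left _ _
  have hK2 : 1 / (ε * Real.log 2) ≤ K := le_max_right _ _
  have hpos : 0 < ε * Real.log 2 := by positivity
  have hK3 : 1 ≤ K * (ε * Real.log 2) := by
    rw [div_le_iff₀ hpos] at hK2; exact hK2
  have key : ∀ p k : ℕ, 2 ≤ p →
      ((k : ℝ) + 1) ≤ (if p < N then K else 1) * (((p : ℝ) ^ k) ^ ε) := by
    intro p k hp
    have hp2 : (2 : ℝ) ≤ p := by exact_mod_cast hp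
    have hpe : (((p : ℝ) ^ k) ^ ε) = ((p : ℝ) ^ ε) ^ k := by
      rw [← Real.rpow_natCast, ← Real.rpow_natCast, ← Real.rpow_mul (by positivity),
        ← Real.rpow_mul (by positivity), mul_comm]
    rw [hpe]
    split_ifs with h
    · have h1 : (2:ℝ) ^ ε ≤ (p : ℝ) ^ ε := Real.rpow_le_rpow (by norm_num) hp2 hε.le
      have h2 : 1 + ε * Real.log 2 ≤ (2:ℝ) ^ ε := by
        rw [Real.rpow_def_of_pos (by norm_num)]
        have := Real.add_one_le_exp (Real.log 2 * ε)
        linarith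
      have h3 : 1 + (k : ℝ) * (ε * Real.log 2) ≤ (1 + ε * Real.log 2) ^ k :=
        one_add_mul_le_pow (by linarith) k
      have h4 : (1 + ε * Real.log 2) ^ k ≤ ((p : ℝ) ^ ε) ^ k :=
        pow_le_pow_left₀ (by linarith) (by linarith) k
      have h5 : K * (1 + (k : ℝ) * (ε * Real.log 2)) ≤ K * ((p : ℝ) ^ ε) ^ k :=
        mul_le_mul_of_nonneg_left (h3.trans h4) (by linarith)
      have hk : (0:ℝ) ≤ k := Nat.cast_nonneg k
      nlinarith
    · have hNp : (2:ℝ) ^ (1 / ε) ≤ p := hN.trans (by exact_mod_cast not_lt.mp h)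
      have h1 : (2:ℝ) ≤ (p : ℝ) ^ ε := by
        calc (2:ℝ) = ((2:ℝ) ^ (1 / ε)) ^ ε := by
              rw [← Real.rpow_mul (by norm_num), one_div_mul_cancel hε.ne', Real.rpow_one]
          _ ≤ _ := Real.rpow_le_rpow (by positivity) hNp hε.le
      have h3 : 1 + (k : ℝ) * 1 ≤ (1 + 1) ^ k := one_add_mul_le_pow (by linarith) k
      have h4 : ((1:ℝ) + 1) ^ k ≤ ((p : ℝ) ^ ε) ^ k :=
        pow_le_pow_left₀ (by linarith) (by linarith) k
      linarith
  refine ⟨K ^ N, one_le_pow₀ hK1, fun n hn => ?_⟩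
  rw [Nat.card_divisors hn]
  push_cast
  calc ∏ p ∈ n.primeFactors, ((n.factorization p : ℝ) + 1)
      ≤ ∏ p ∈ n.primeFactors, ((if p < N then K else 1) * (((p : ℝ) ^ (n.factorization p)) ^ ε)) :=
        Finset.prod_le_prod (fun _ _ => by positivity)
          (fun p hp => key p _ (Nat.prime_of_mem_primeFactors hp).two_le)
    _ = (∏ p ∈ n.primeFactors, (if p < N then K else 1)) *
          (∏ p ∈ n.primeFactors, (p : ℝ) ^ (n.factorization p)) ^ ε := by
        rw [Finset.prod_mul_distrib, Real.finsetProd_rpow _ _ (fun _ _ => by positivity)]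
    _ ≤ K ^ N * (n : ℝ) ^ ε := by
        have e1 : (∏ p ∈ n.primeFactors, (p : ℝ) ^ (n.factorization p)) = n := by
          have := Nat.prod_factorization_pow_eq_self hn
          rw [Finsupp.prod, Nat.support_factorization] at this
          conv_rhs => rw [← this]
          push_cast; rfl
        rw [e1]
        refine mul_le_mul_of_nonneg_right ?_ (by positivity)
        rw [Finset.prod_ite, Finset.prod_const, Finset.prod_const_one, mul_one]
        refine pow_le_pow_right₀ hK1 ?_
        calc _ ≤ (Finset.range N).card := Finset.card_le_card (fun p hp => by
              simp at hp ⊢; exact hp.2)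
          _ = N := Finset.card_range N

lemma sq_dvd_four (g Δ : ℤ) (hΔ : Squarefree Δ) (h : g ^ 2 ∣ 4 * Δ) : g ∣ 2 := by
  rcases Int.even_or_odd g with ⟨k, hk⟩ | hg
  · have : k * k ∣ Δ := by
      have h2 : 4 * (k * k) ∣ 4 * Δ := by rw [hk] at h; convert h using 1; ring
      exact (mul_dvd_mul_iff_left (by norm_num)).mp h2
    have hu := hΔ k this
    have := hu.dvd (a := 1)
    rw [hk]
    obtain ⟨r, hr⟩ := this
    exact ⟨r, by linear_combination 2 * hr⟩
  · have h2 : IsCoprime g 2 := by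
      obtain ⟨k, hk⟩ := hg
      exact ⟨1, -k, by rw [hk]; ring⟩
    have h4 : IsCoprime (g ^ 2) 4 := by
      have := (IsCoprime.pow (m := 2) (n := 2) h2)
      norm_num at this; exact this
    have : g * g ∣ Δ := by
      have := h4.dvd_of_dvd_mul_left h
      rwa [sq] at this
    exact (hΔ g this).dvd

lemma same_key (Δ M X0 Y0 X Y X1 Y1 : ℤ) (hM : 0 < M) (hΔ : Squarefree Δ)
    (h0 : Y0 ^ 2 + Δ * X0 ^ 2 = M) (h : Y ^ 2 + Δ * X ^ 2 = M) (h1 : Y1 ^ 2 + Δ * X1 ^ 2 = M)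
    (c0 : IsCoprime X0 Y0) (c : IsCoprime X Y)
    (hd : Int.gcd (X * Y0 - X0 * Y) M = Int.gcd (X1 * Y0 - X0 * Y1) M) :
    M ∣ 2 * (X * Y1 - X1 * Y) := by
  have cop : ∀ x y : ℤ, y ^ 2 + Δ * x ^ 2 = M → IsCoprime x y → IsCoprime x M := by
    intro x y hxy hc
    have : IsCoprime x (y ^ 2) := hc.pow_right
    rw [← hxy]
    have h2 := this.add_mul_left_right (Δ * x)
    have e : y ^ 2 + Δ * x ^ 2 = y ^ 2 + x * (Δ * x) := by ring
    rw [e]; exact h2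
  have cX0 := cop X0 Y0 h0 c0
  have cX := cop X Y h c
  have half : ∀ x y : ℤ, y ^ 2 + Δ * x ^ 2 = M →
      ∃ e : ℤ, M = (Int.gcd (x * Y0 - X0 * y) M : ℤ) * e ∧ e ∣ x * Y0 + X0 * y := by
    intro x y hxy
    set d : ℤ := (Int.gcd (x * Y0 - X0 * y) M : ℤ) with hdd
    obtain ⟨e, he⟩ : d ∣ M := Int.gcd_dvd_right _ _
    obtain ⟨f, hf⟩ : d ∣ x * Y0 - X0 * y := Int.gcd_dvd_left _ _
    have hd0 : d ≠ 0 := by rintro hd0; rw [hd0] at he; simp at he; omega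
    refine ⟨e, he, ?_⟩
    have hcop : IsCoprime e f := by
      have hb : d = d * (f * Int.gcdA (x * Y0 - X0 * y) M + e * Int.gcdB (x * Y0 - X0 * y) M) := by
        conv_lhs => rw [hdd, Int.gcd_eq_gcd_ab]
        generalize Int.gcdA (x * Y0 - X0 * y) M = p
        generalize Int.gcdB (x * Y0 - X0 * y) M = q
        rw [hf]; linear_combination q * he
      have hb1 : f * Int.gcdA (x * Y0 - X0 * y) M + e * Int.gcdB (x * Y0 - X0 * y) M = 1 := by
        apply mul_left_cancel₀ hd0; rw [← hb, mul_one]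
      exact ⟨Int.gcdB (x * Y0 - X0 * y) M, Int.gcdA (x * Y0 - X0 * y) M, by linarith⟩
    have : d * e ∣ d * (f * (x * Y0 + X0 * y)) := by
      rw [← he, ← mul_assoc, ← hf]
      exact ⟨x ^ 2 - X0 ^ 2, by linear_combination x ^ 2 * h0 - X0 ^ 2 * hxy⟩
    have := (mul_dvd_mul_iff_left hd0).mp this
    exact hcop.dvd_of_dvd_mul_left this
  obtain ⟨e, he, hes⟩ := half X Y h
  obtain ⟨e1, he1, hes1⟩ := half X1 Y1 h1
  rw [← hd] at he1
  have hw : (Int.gcd (X * Y0 - X0 * Y) M : ℤ) ∣ X * Y0 - X0 * Y := Int.gcd_dvd_left _ _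
  have hw1 : (Int.gcd (X * Y0 - X0 * Y) M : ℤ) ∣ X1 * Y0 - X0 * Y1 := by
    rw [hd]; exact Int.gcd_dvd_left _ _
  generalize (Int.gcd (X * Y0 - X0 * Y) M : ℤ) = d at *
  have hd0 : d ≠ 0 := by rintro hd0; rw [hd0] at he; simp at he; omega
  have hee : e1 = e := by apply mul_left_cancel₀ hd0; rw [← he, ← he1]
  subst hee
  have dM : d ∣ M := ⟨_, he⟩
  have eM : e1 ∣ M := ⟨d, by rw [he]; ring⟩
  have hdv : d ∣ X * Y1 - X1 * Y := by
    have : d ∣ X0 * (X * Y1 - X1 * Y) := by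
      have := dvd_sub (hw.mul_left X1) (hw1.mul_left X)
      exact dvd_cast this (by ring)
    exact ((cX0.of_isCoprime_of_dvd_right dM).symm).dvd_of_dvd_mul_left this
  have hev : e1 ∣ X * Y1 - X1 * Y := by
    have : e1 ∣ X0 * (X * Y1 - X1 * Y) := by
      have := dvd_sub (hes1.mul_left X) (hes.mul_left X1)
      exact dvd_cast this (by ring)
    exact ((cX0.of_isCoprime_of_dvd_right eM).symm).dvd_of_dvd_mul_left this
  -- gcd
  have hg2 : ((Int.gcd d e1 : ℤ)) ∣ 2 := by
    have g1 : ((Int.gcd d e1 : ℤ)) ∣ d := Int.gcd_dvd_left _ _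
    have g2 : ((Int.gcd d e1 : ℤ)) ∣ e1 := Int.gcd_dvd_right _ _
    generalize ((Int.gcd d e1 : ℤ)) = g at *
    have gM : g ∣ M := g1.trans dM
    have ggM : g ^ 2 ∣ M := by rw [he, sq]; exact mul_dvd_mul g1 g2
    have a1 : g ∣ X * (2 * Y0) := by
      have := dvd_add (g1.trans hw) (g2.trans hes)
      exact dvd_cast this (by ring)
    have a2 : g ∣ 2 * Y0 := ((cX.of_isCoprime_of_dvd_right gM).symm).dvd_of_dvd_mul_left a1
    have a3 : g ^ 2 ∣ 4 * Y0 ^ 2 := by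
      have := pow_dvd_pow_of_dvd a2 2
      exact dvd_cast this (by ring)
    have a4 : g ^ 2 ∣ X0 ^ 2 * (4 * Δ) := by
      have := dvd_sub (ggM.mul_left 4) a3
      exact dvd_cast this (by rw [← h0]; ring)
    have a5 : IsCoprime (g ^ 2) (X0 ^ 2) := (cX0.of_isCoprime_of_dvd_right gM).symm.pow
    exact sq_dvd_four g Δ hΔ (a5.dvd_of_dvd_mul_left a4)
  have b1 : M ∣ (Int.gcd d e1 : ℤ) * (X * Y1 - X1 * Y) := by
    rw [Int.gcd_eq_gcd_ab, he]
    generalize Int.gcdA d e1 = p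
    generalize Int.gcdB d e1 = q
    obtain ⟨r, hr⟩ := hdv
    obtain ⟨s, hs⟩ := hev
    exact ⟨p * s + q * r, by linear_combination d * p * hs + e1 * q * hr⟩
  exact b1.trans (mul_dvd_mul_right hg2 _)

lemma prim_count (Δ : ℤ) (M : ℕ) (hM : 0 < M) (hΔ0 : 0 < Δ) (hΔ : Squarefree Δ)
    (S : Finset (ℤ × ℤ)) (hS : ∀ p ∈ S, p.2 ^ 2 + Δ * p.1 ^ 2 = M ∧ IsCoprime p.1 p.2) :
    S.card ≤ 25 * M.divisors.card := by
  have hM' : (0:ℤ) < M := by exact_mod_cast hM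
  rcases S.eq_empty_or_nonempty with rfl | ⟨p0, hp0⟩
  · simp
  obtain ⟨h0, c0⟩ := hS p0 hp0
  refine Finset.card_le_mul_card_image_of_maps_to
    (f := fun p : ℤ × ℤ => Int.gcd (p.1 * p0.2 - p0.1 * p.2) M) ?_ 25 ?_
  · intro p _
    rw [Nat.mem_divisors]
    refine ⟨?_, hM.ne'⟩
    have := Int.gcd_dvd_right (p.1 * p0.2 - p0.1 * p.2) M
    exact_mod_cast this
  · intro d _
    rcases (S.filter (fun p : ℤ × ℤ => Int.gcd (p.1 * p0.2 - p0.1 * p.2) M = d)).eq_empty_or_nonempty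
      with he | ⟨p1, hp1⟩
    · rw [he]; simp
    rw [Finset.mem_filter] at hp1
    obtain ⟨hp1S, hp1d⟩ := hp1
    obtain ⟨h1, c1⟩ := hS p1 hp1S
    have hcard : ((Finset.Icc (-2:ℤ) 2) ×ˢ (Finset.Icc (-2:ℤ) 2)).card = 25 := by decide
    rw [← hcard]
    have key : ∀ p ∈ S.filter (fun p : ℤ × ℤ => Int.gcd (p.1 * p0.2 - p0.1 * p.2) M = d),
        ∃ u v : ℤ, 2 * (p.2 * p1.2 + Δ * p.1 * p1.1) = M * u ∧
          2 * (p.1 * p1.2 - p1.1 * p.2) = M * v ∧ u ^ 2 + Δ * v ^ 2 = 4 := by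
      intro p hp
      rw [Finset.mem_filter] at hp
      obtain ⟨hpS, hpd⟩ := hp
      obtain ⟨h, c⟩ := hS p hpS
      obtain ⟨v, hv⟩ := same_key Δ M p0.1 p0.2 p.1 p.2 p1.1 p1.2 hM' hΔ h0 h h1 c0 c
        (by rw [hpd, hp1d])
      have hid : (2 * (p.2 * p1.2 + Δ * p.1 * p1.1)) ^ 2 = (M:ℤ) ^ 2 * (4 - Δ * v ^ 2) := by
        have e1 : (2 * (p.2 * p1.2 + Δ * p.1 * p1.1)) ^ 2 +
          Δ * (2 * (p.1 * p1.2 - p1.1 * p.2)) ^ 2 = 4 * (M:ℤ) ^ 2 := by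
          linear_combination 4 * (p1.2 ^ 2 + Δ * p1.1 ^ 2) * h + 4 * (M:ℤ) * h1
        rw [hv] at e1
        linear_combination e1
      obtain ⟨u, hu⟩ : (M:ℤ) ∣ 2 * (p.2 * p1.2 + Δ * p.1 * p1.1) := by
        rw [← Int.pow_dvd_pow_iff (n := 2) (by norm_num)]
        exact ⟨_, hid⟩
      refine ⟨u, v, hu, hv, ?_⟩
      rw [hu] at hid
      have : (M:ℤ) ^ 2 * (u ^ 2 + Δ * v ^ 2) = (M:ℤ) ^ 2 * 4 := by linear_combination hid
      exact mul_left_cancel₀ (by positivity) this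
    choose! u v hu hv huv using key
    refine Finset.card_le_card_of_injOn (fun p => (u p, v p)) ?_ ?_
    · intro p hp
      have := huv p hp
      simp only [Finset.coe_product, Finset.coe_Icc, Set.mem_prod, Set.mem_Icc]
      refine ⟨⟨?_, ?_⟩, ?_, ?_⟩ <;> nlinarith [sq_nonneg (u p), sq_nonneg (v p)]
    · intro p hp q hq hpq
      simp only [Prod.mk.injEq] at hpq
      obtain ⟨e1, e2⟩ := hpq
      have a1 := hu p hp
      have a2 := hu q hq
      have b1 := hv p hp
      have b2 := hv q hq
      rw [e1] at a1
      rw [e2] at b1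
      have f1 : (p.2 - q.2) * p1.2 + Δ * (p.1 - q.1) * p1.1 = 0 := by linarith
      have f2 : (p.1 - q.1) * p1.2 - p1.1 * (p.2 - q.2) = 0 := by linarith
      have g1 : (M:ℤ) * (p.1 - q.1) = 0 := by
        rw [← h1]; linear_combination p1.1 * f1 + p1.2 * f2
      have g2 : (M:ℤ) * (p.2 - q.2) = 0 := by
        rw [← h1]; linear_combination p1.2 * f1 - Δ * p1.1 * f2
      have g1' := (mul_eq_zero.mp g1).resolve_left hM'.ne'
      have g2' := (mul_eq_zero.mp g2).resolve_left hM'.ne'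
      exact Prod.ext (by linarith) (by linarith)

lemma sqf_count (Δ : ℤ) (M : ℕ) (hM : 0 < M) (hΔ0 : 0 < Δ) (hΔ : Squarefree Δ)
    (S : Finset (ℤ × ℤ)) (hS : ∀ p ∈ S, p.2 ^ 2 + Δ * p.1 ^ 2 = M) :
    S.card ≤ 25 * M.divisors.card * M.divisors.card := by
  have dv : ∀ p ∈ S, (Int.gcd p.1 p.2) ^ 2 ∣ M := by
    intro p hp
    have h := hS p hp
    have a : ((Int.gcd p.1 p.2 : ℤ)) ∣ p.1 := Int.gcd_dvd_left _ _
    have b : ((Int.gcd p.1 p.2 : ℤ)) ∣ p.2 := Int.gcd_dvd_right _ _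
    have : ((Int.gcd p.1 p.2 : ℤ)) ^ 2 ∣ M := by
      rw [← h]
      exact dvd_add (pow_dvd_pow_of_dvd b 2) ((pow_dvd_pow_of_dvd a 2).mul_left _)
    exact_mod_cast this
  refine Finset.card_le_mul_card_image_of_maps_to
    (f := fun p : ℤ × ℤ => Int.gcd p.1 p.2) ?_ _ ?_
  · intro p hp
    rw [Nat.mem_divisors]
    exact ⟨(dvd_pow_self _ (by norm_num)).trans (dv p hp), hM.ne'⟩
  · intro g hg
    rcases (S.filter (fun p : ℤ × ℤ => Int.gcd p.1 p.2 = g)).eq_empty_or_nonempty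
      with he | ⟨p1, hp1⟩
    · rw [he]; simp
    rw [Finset.mem_filter] at hp1
    obtain ⟨M', hM'⟩ : g ^ 2 ∣ M := by rw [← hp1.2]; exact dv p1 hp1.1
    have hg0 : 0 < g := Nat.pos_of_mem_divisors hg
    have hM'0 : 0 < M' := by
      rcases Nat.eq_zero_or_pos M' with h | h
      · rw [h] at hM'; omega
      · exact h
    have key : ∀ p ∈ S.filter (fun p : ℤ × ℤ => Int.gcd p.1 p.2 = g),
        ∃ q : ℤ × ℤ, p = ((g:ℤ) * q.1, (g:ℤ) * q.2) := by
      intro p hp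
      rw [Finset.mem_filter] at hp
      obtain ⟨a, ha⟩ : ((g : ℤ)) ∣ p.1 := by rw [← hp.2]; exact Int.gcd_dvd_left _ _
      obtain ⟨b, hb⟩ : ((g : ℤ)) ∣ p.2 := by rw [← hp.2]; exact Int.gcd_dvd_right _ _
      exact ⟨(a, b), Prod.ext ha hb⟩
    choose! q hq using key
    have inj : Set.InjOn q (S.filter (fun p : ℤ × ℤ => Int.gcd p.1 p.2 = g)) := by
      intro a ha b hb hab
      rw [hq a ha, hq b hb, hab]
    rw [← Finset.card_image_of_injOn inj]
    calc _ ≤ 25 * M'.divisors.card := by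
          refine prim_count Δ M' hM'0 hΔ0 hΔ _ ?_
          intro r hr
          rw [Finset.mem_image] at hr
          obtain ⟨p, hp, rfl⟩ := hr
          have e := hq p hp
          have hp' := Finset.mem_filter.mp hp
          have h := hS p hp'.1
          have hgcd := hp'.2
          have hgz : (g:ℤ) ≠ 0 := by exact_mod_cast hg0.ne'
          rw [e] at h hgcd
          simp only at h hgcd
          constructor
          · have : (g:ℤ) ^ 2 * ((q p).2 ^ 2 + Δ * (q p).1 ^ 2) = (g:ℤ) ^ 2 * M' := by
              rw [hM'] at h; push_cast at h; linear_combination h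
            exact mul_left_cancel₀ (by positivity) this
          · rw [Int.isCoprime_iff_gcd_eq_one]
            rw [Int.gcd_mul_left] at hgcd
            rw [Int.natAbs_natCast] at hgcd
            exact Nat.eq_of_mul_eq_mul_left hg0 (by rw [hgcd, mul_one])
      _ ≤ 25 * M.divisors.card := by
          refine Nat.mul_le_mul_left _ (Finset.card_le_card ?_)
          exact Nat.divisors_subset_of_dvd hM.ne' ⟨g ^ 2, by rw [hM']; ring⟩

lemma pos_count (Δ : ℤ) (M : ℤ) (hΔ0 : 0 < Δ)
    (S : Finset (ℤ × ℤ)) (hS : ∀ p ∈ S, p.2 ^ 2 + Δ * p.1 ^ 2 = M) :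
    S.card ≤ 25 * M.natAbs.divisors.card * M.natAbs.divisors.card + 1 := by
  rcases lt_trichotomy M 0 with h | h | h
  · have : S = ∅ := by
      rw [Finset.eq_empty_iff_forall_notMem]
      intro p hp
      have := hS p hp
      nlinarith [sq_nonneg p.2, mul_nonneg hΔ0.le (sq_nonneg p.1)]
    rw [this]; simp
  · have : S ⊆ {(0, 0)} := by
      intro p hp
      have := hS p hp
      rw [h] at this
      have a := sq_nonneg p.2
      have b := mul_nonneg hΔ0.le (sq_nonneg p.1)
      have a0 : p.2 ^ 2 = 0 := by linarith
      have b0 : Δ * p.1 ^ 2 = 0 := by linarith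
      have a1 : p.2 = 0 := by simpa using a0
      have b1 : p.1 = 0 := by
        have := (mul_eq_zero.mp b0).resolve_left hΔ0.ne'
        simpa using this
      rw [Finset.mem_singleton]
      exact Prod.ext b1 a1
    have := Finset.card_le_card this
    simp at this
    omega
  · obtain ⟨a, b, hab, ha⟩ := Nat.sq_mul_squarefree Δ.natAbs
    have hΔe : Δ = (b:ℤ) ^ 2 * a := by
      have : (Δ.natAbs : ℤ) = Δ := Int.natAbs_of_nonneg hΔ0.le
      rw [← this, ← hab]; push_cast; ring
    have hb0 : (b:ℤ) ≠ 0 := by rintro hb; rw [hb] at hΔe; simp at hΔe; omega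
    have ha0 : 0 < a := Nat.pos_of_ne_zero (fun hb => by rw [hb] at hΔe; simp at hΔe; omega)
    have hMe : (M.natAbs : ℤ) = M := Int.natAbs_of_nonneg h.le
    have inj : Set.InjOn (fun p : ℤ × ℤ => ((b:ℤ) * p.1, p.2)) S := by
      intro p _ q _ hpq
      simp only [Prod.mk.injEq] at hpq
      exact Prod.ext (mul_left_cancel₀ hb0 hpq.1) hpq.2
    rw [← Finset.card_image_of_injOn inj]
    refine le_trans (sqf_count a M.natAbs (by omega) (by exact_mod_cast ha0)
      (by exact Int.squarefree_natCast.mpr ha) _ ?_) (Nat.le_succ _)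
    intro r hr
    rw [Finset.mem_image] at hr
    obtain ⟨p, hp, rfl⟩ := hr
    have := hS p hp
    rw [hMe, ← this, hΔe]
    simp only
    ring

/-- Leading minors of a symmetric matrix. -/
def mn1 (B : Matrix (Fin 4) (Fin 4) ℤ) : ℤ := B 0 0
def mn2 (B : Matrix (Fin 4) (Fin 4) ℤ) : ℤ := B 0 0 * B 1 1 - B 0 1 ^ 2
def mn3 (B : Matrix (Fin 4) (Fin 4) ℤ) : ℤ :=
  B 0 0 * (B 1 1 * B 2 2 - B 1 2 ^ 2) - B 0 1 * (B 0 1 * B 2 2 - B 1 2 * B 0 2)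
    + B 0 2 * (B 0 1 * B 1 2 - B 1 1 * B 0 2)
def mnc (B : Matrix (Fin 4) (Fin 4) ℤ) : ℤ :=
  B 0 0 * (B 1 1 * B 2 3 - B 1 2 * B 1 3) - B 0 1 * (B 0 1 * B 2 3 - B 1 3 * B 0 2)
    + B 0 3 * (B 0 1 * B 1 2 - B 1 1 * B 0 2)
def mne (B : Matrix (Fin 4) (Fin 4) ℤ) : ℤ :=
  B 0 0 * (B 1 1 * B 3 3 - B 1 3 ^ 2) - B 0 1 * (B 0 1 * B 3 3 - B 1 3 * B 0 3)
    + B 0 3 * (B 0 1 * B 1 3 - B 1 1 * B 0 3)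

def PDZ (B : Matrix (Fin 4) (Fin 4) ℤ) : Prop :=
  B.IsSymm ∧ ∀ x : Fin 4 → ℤ, x ≠ 0 → 0 < x ⬝ᵥ (B.mulVec x)

lemma qf_expand (B : Matrix (Fin 4) (Fin 4) ℤ) (hB : B.IsSymm) (x : Fin 4 → ℤ) :
    x ⬝ᵥ (B.mulVec x) = B 0 0 * x 0 ^ 2 + B 1 1 * x 1 ^ 2 + B 2 2 * x 2 ^ 2 + B 3 3 * x 3 ^ 2
      + 2 * (B 0 1 * x 0 * x 1 + B 0 2 * x 0 * x 2 + B 0 3 * x 0 * x 3 + B 1 2 * x 1 * x 2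
        + B 1 3 * x 1 * x 3 + B 2 3 * x 2 * x 3) := by
  have h10 : B 1 0 = B 0 1 := hB.apply 0 1
  have h20 : B 2 0 = B 0 2 := hB.apply 0 2
  have h30 : B 3 0 = B 0 3 := hB.apply 0 3
  have h21 : B 2 1 = B 1 2 := hB.apply 1 2
  have h31 : B 3 1 = B 1 3 := hB.apply 1 3
  have h32 : B 3 2 = B 2 3 := hB.apply 2 3
  simp only [dotProduct, Matrix.mulVec, Fin.sum_univ_four, h10, h20, h30, h21, h31, h32]
  ring

lemma det_expand (B : Matrix (Fin 4) (Fin 4) ℤ) (hB : B.IsSymm) :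
    mn3 B * mne B - mnc B ^ 2 = mn2 B * B.det := by
  have h10 : B 1 0 = B 0 1 := hB.apply 0 1
  have h20 : B 2 0 = B 0 2 := hB.apply 0 2
  have h30 : B 3 0 = B 0 3 := hB.apply 0 3
  have h21 : B 2 1 = B 1 2 := hB.apply 1 2
  have h31 : B 3 1 = B 1 3 := hB.apply 1 3
  have h32 : B 3 2 = B 2 3 := hB.apply 2 3
  have hdet : B.det = B 0 0 * (B 1 1 * (B 2 2 * B 3 3 - B 2 3 * B 3 2)
        - B 1 2 * (B 2 1 * B 3 3 - B 2 3 * B 3 1) + B 1 3 * (B 2 1 * B 3 2 - B 2 2 * B 3 1))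
      - B 0 1 * (B 1 0 * (B 2 2 * B 3 3 - B 2 3 * B 3 2)
        - B 1 2 * (B 2 0 * B 3 3 - B 2 3 * B 3 0) + B 1 3 * (B 2 0 * B 3 2 - B 2 2 * B 3 0))
      + B 0 2 * (B 1 0 * (B 2 1 * B 3 3 - B 2 3 * B 3 1)
        - B 1 1 * (B 2 0 * B 3 3 - B 2 3 * B 3 0) + B 1 3 * (B 2 0 * B 3 1 - B 2 1 * B 3 0))
      - B 0 3 * (B 1 0 * (B 2 1 * B 3 2 - B 2 2 * B 3 1)
        - B 1 1 * (B 2 0 * B 3 2 - B 2 2 * B 3 0) + B 1 2 * (B 2 0 * B 3 1 - B 2 1 * B 3 0)) := by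
    rw [Matrix.det_succ_row_zero]
    simp [Fin.sum_univ_succ, Matrix.det_fin_three, Fin.succAbove, Matrix.submatrix_apply]
    ring
  rw [hdet, h10, h20, h30, h21, h31, h32]
  unfold mn2 mn3 mnc mne
  ring

lemma PDZ.pos {B : Matrix (Fin 4) (Fin 4) ℤ} (hB : PDZ B) : 0 < mn1 B ∧ 0 < mn2 B ∧ 0 < mn3 B := by
  obtain ⟨hs, hp⟩ := hB
  have p1 : 0 < mn1 B := by
    have := hp ![1, 0, 0, 0] (by intro h; have := congrFun h 0; simp at this)
    rw [qf_expand B hs] at this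
    simpa [mn1] using this
  have p2 : 0 < mn2 B := by
    have := hp ![-B 0 1, B 0 0, 0, 0] (by
      intro h; have := congrFun h 1; simp [mn1] at this p1; omega)
    rw [qf_expand B hs] at this
    simp at this
    have e : 0 < mn1 B * mn2 B := by
      unfold mn1 mn2; linarith
    exact pos_of_mul_pos_right e p1.le
  have p3 : 0 < mn3 B := by
    have := hp ![B 0 1 * B 1 2 - B 1 1 * B 0 2, B 0 1 * B 0 2 - B 0 0 * B 1 2, mn2 B, 0] (by
      intro h; have := congrFun h 2; simp at this; omega)
    rw [qf_expand B hs] at this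
    simp at this
    have e : 0 < mn2 B * mn3 B := by
      unfold mn2 at this
      unfold mn3 mn2; linarith
    exact pos_of_mul_pos_right e p2.le
  exact ⟨p1, p2, p3⟩

lemma PDZ.conj {A : Matrix (Fin 4) (Fin 4) ℤ} (hA : PDZ A) (U : Matrix (Fin 4) (Fin 4) ℤ)
    (hU : IsUnit U.det) : PDZ (U.transpose * A * U) := by
  refine ⟨?_, ?_⟩
  · have := hA.1
    unfold Matrix.IsSymm at this ⊢
    rw [Matrix.transpose_mul, Matrix.transpose_mul, this, Matrix.transpose_transpose, Matrix.mul_assoc]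
  · intro x hx
    have e : x ⬝ᵥ ((U.transpose * A * U).mulVec x) = (U.mulVec x) ⬝ᵥ (A.mulVec (U.mulVec x)) := by
      rw [← Matrix.mulVec_mulVec, ← Matrix.mulVec_mulVec, Matrix.dotProduct_mulVec,
        Matrix.vecMul_transpose]
    rw [e]
    apply hA.2
    intro h
    apply hx
    have hU' : IsUnit U := (Matrix.isUnit_iff_isUnit_det U).mpr hU
    exact Matrix.mulVec_injective_of_isUnit hU' (by rw [h, Matrix.mulVec_zero])

lemma red_step (a b c : ℤ) (ha : 0 < a) (h : ∀ m : ℤ, a ≤ c + 2 * m * b + m ^ 2 * a) :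
    3 * a ^ 2 ≤ 4 * (a * c - b ^ 2) := by
  obtain ⟨m, h1, h2⟩ : ∃ m : ℤ, -a ≤ 2 * (b + m * a) ∧ 2 * (b + m * a) ≤ a := by
    refine ⟨-((2 * b + a) / (2 * a)), ?_⟩
    have e1 := Int.emod_add_mul_ediv (2 * b + a) (2 * a)
    have e2 := Int.emod_nonneg (2 * b + a) (show 2 * a ≠ 0 by omega)
    have e3 := Int.emod_lt_of_pos (2 * b + a) (show 0 < 2 * a by omega)
    generalize (2 * b + a) / (2 * a) = q at *
    constructor <;> nlinarith
  have := mul_le_mul_of_nonneg_left (h m) ha.le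
  nlinarith [mul_nonneg (sub_nonneg.mpr h2) (by linarith : 0 ≤ 2 * (b + m * a) + a)]

lemma reduce (A : Matrix (Fin 4) (Fin 4) ℤ) (hA : PDZ A) :
    ∃ U : Matrix (Fin 4) (Fin 4) ℤ, IsUnit U.det ∧ ∃ B, B = U.transpose * A * U ∧
      3 * mn1 B ^ 2 ≤ 4 * mn2 B ∧ 3 * mn2 B ^ 2 ≤ 4 * (mn1 B * mn3 B) ∧
      3 * mn3 B ^ 2 ≤ 4 * (mn2 B * B.det) := by
  classical
  have hex : ∃ k : ℕ, ∃ U : Matrix (Fin 4) (Fin 4) ℤ, IsUnit U.det ∧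
      (mn1 (U.transpose * A * U) * mn2 (U.transpose * A * U) * mn3 (U.transpose * A * U)).toNat = k :=
    ⟨_, 1, by simp, rfl⟩
  obtain ⟨U, hU, hk⟩ := Nat.find_spec hex
  refine ⟨U, hU, _, rfl, ?_⟩
  have hB := hA.conj U hU
  have hmin : ∀ V : Matrix (Fin 4) (Fin 4) ℤ, IsUnit V.det → ∀ B', B' = V.transpose * (U.transpose * A * U) * V →
      mn1 (U.transpose * A * U) * mn2 (U.transpose * A * U) * mn3 (U.transpose * A * U)
        ≤ mn1 B' * mn2 B' * mn3 B' := by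
    intro V hV B' hB'
    have h1 := Nat.find_min' hex ⟨U * V, by rw [Matrix.det_mul]; exact hU.mul hV, rfl⟩
    rw [← hk] at h1
    have e : (U * V).transpose * A * (U * V) = B' := by
      rw [hB', Matrix.transpose_mul]; simp only [Matrix.mul_assoc]
    rw [e] at h1
    have p' : PDZ B' := by rw [hB']; exact hB.conj V hV
    obtain ⟨a1, a2, a3⟩ := p'.pos
    have : 0 < mn1 B' * mn2 B' * mn3 B' := by positivity
    omega
  generalize U.transpose * A * U = B at *
  obtain ⟨p1, p2, p3⟩ := hB.pos
  have hs := hB.1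
  have h10 : B 1 0 = B 0 1 := hs.apply 0 1
  have h20 : B 2 0 = B 0 2 := hs.apply 0 2
  have h30 : B 3 0 = B 0 3 := hs.apply 0 3
  have h21 : B 2 1 = B 1 2 := hs.apply 1 2
  have h31 : B 3 1 = B 1 3 := hs.apply 1 3
  have h32 : B 3 2 = B 2 3 := hs.apply 2 3
  refine ⟨?_, ?_, ?_⟩
  · refine red_step (mn1 B) (B 0 1) (B 1 1) p1 ?_ |>.trans_eq (by unfold mn1 mn2; ring)
    intro m
    have := hmin !![m, 1, 0, 0; 1, 0, 0, 0; 0, 0, 1, 0; 0, 0, 0, 1] (by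
      rw [Matrix.det_succ_row_zero]
      simp [Fin.sum_univ_succ, Matrix.det_fin_three, Fin.succAbove]) _ rfl
    have e : ∀ B', B' = (!![m, 1, 0, 0; 1, 0, 0, 0; 0, 0, 1, 0; 0, 0, 0, 1]).transpose * B *
        !![m, 1, 0, 0; 1, 0, 0, 0; 0, 0, 1, 0; 0, 0, 0, 1] →
        mn1 B' = B 1 1 + 2 * m * B 0 1 + m ^ 2 * mn1 B ∧ mn2 B' = mn2 B ∧ mn3 B' = mn3 B := by
      intro B' hB'
      have e00 : B' 0 0 = B 1 1 + 2 * m * B 0 1 + m ^ 2 * B 0 0 := by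
        rw [hB']; simp [Matrix.mul_apply, Fin.sum_univ_four, h10]; ring
      have e01 : B' 0 1 = B 0 1 + m * B 0 0 := by
        rw [hB']; simp [Matrix.mul_apply, Fin.sum_univ_four, h10]; ring
      have e02 : B' 0 2 = B 1 2 + m * B 0 2 := by
        rw [hB']; simp [Matrix.mul_apply, Fin.sum_univ_four]; ring
      have e11 : B' 1 1 = B 0 0 := by
        rw [hB']; simp [Matrix.mul_apply, Fin.sum_univ_four]
      have e12 : B' 1 2 = B 0 2 := by
        rw [hB']; simp [Matrix.mul_apply, Fin.sum_univ_four]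
      have e22 : B' 2 2 = B 2 2 := by
        rw [hB']; simp [Matrix.mul_apply, Fin.sum_univ_four]
      refine ⟨?_, ?_, ?_⟩
      · unfold mn1; rw [e00]
      · unfold mn2; rw [e00, e01, e11]; ring
      · unfold mn3; rw [e00, e01, e11, e02, e12, e22]; ring
    obtain ⟨e1, e2, e3⟩ := e _ rfl
    rw [e1, e2, e3] at this
    exact le_of_mul_le_mul_right (le_of_mul_le_mul_right this p3) p2
  · refine red_step (mn2 B) (B 0 0 * B 1 2 - B 0 1 * B 0 2) (B 0 0 * B 2 2 - B 0 2 ^ 2) p2 ?_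
      |>.trans_eq (by unfold mn1 mn2 mn3; ring)
    intro m
    have := hmin !![1, 0, 0, 0; 0, m, 1, 0; 0, 1, 0, 0; 0, 0, 0, 1] (by
      rw [Matrix.det_succ_row_zero]
      simp [Fin.sum_univ_succ, Matrix.det_fin_three, Fin.succAbove]) _ rfl
    have e : ∀ B', B' = (!![1, 0, 0, 0; 0, m, 1, 0; 0, 1, 0, 0; 0, 0, 0, 1]).transpose * B *
        !![1, 0, 0, 0; 0, m, 1, 0; 0, 1, 0, 0; 0, 0, 0, 1] →
        mn1 B' = mn1 B ∧ mn2 B' = (B 0 0 * B 2 2 - B 0 2 ^ 2) +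
          2 * m * (B 0 0 * B 1 2 - B 0 1 * B 0 2) + m ^ 2 * mn2 B ∧ mn3 B' = mn3 B := by
      intro B' hB'
      have e00 : B' 0 0 = B 0 0 := by
        rw [hB']; simp [Matrix.mul_apply, Fin.sum_univ_four]
      have e01 : B' 0 1 = B 0 2 + m * B 0 1 := by
        rw [hB']; simp [Matrix.mul_apply, Fin.sum_univ_four]; ring
      have e02 : B' 0 2 = B 0 1 := by
        rw [hB']; simp [Matrix.mul_apply, Fin.sum_univ_four]
      have e11 : B' 1 1 = B 2 2 + 2 * m * B 1 2 + m ^ 2 * B 1 1 := by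
        rw [hB']; simp [Matrix.mul_apply, Fin.sum_univ_four, h21]; ring
      have e12 : B' 1 2 = B 1 2 + m * B 1 1 := by
        rw [hB']; simp [Matrix.mul_apply, Fin.sum_univ_four, h21]; ring
      have e22 : B' 2 2 = B 1 1 := by
        rw [hB']; simp [Matrix.mul_apply, Fin.sum_univ_four]
      refine ⟨?_, ?_, ?_⟩
      · unfold mn1; rw [e00]
      · unfold mn2; rw [e00, e01, e11]; ring
      · unfold mn3; rw [e00, e01, e11, e02, e12, e22]; ring
    obtain ⟨e1, e2, e3⟩ := e _ rfl
    rw [e1, e2, e3] at this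
    exact le_of_mul_le_mul_left (le_of_mul_le_mul_right this p3) p1
  · refine red_step (mn3 B) (mnc B) (mne B) p3 ?_ |>.trans_eq (by rw [det_expand B hs])
    intro m
    have := hmin !![1, 0, 0, 0; 0, 1, 0, 0; 0, 0, m, 1; 0, 0, 1, 0] (by
      rw [Matrix.det_succ_row_zero]
      simp [Fin.sum_univ_succ, Matrix.det_fin_three, Fin.succAbove]) _ rfl
    have e : ∀ B', B' = (!![1, 0, 0, 0; 0, 1, 0, 0; 0, 0, m, 1; 0, 0, 1, 0]).transpose * B *
        !![1, 0, 0, 0; 0, 1, 0, 0; 0, 0, m, 1; 0, 0, 1, 0] →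
        mn1 B' = mn1 B ∧ mn2 B' = mn2 B ∧ mn3 B' = mne B + 2 * m * mnc B + m ^ 2 * mn3 B := by
      intro B' hB'
      have e00 : B' 0 0 = B 0 0 := by
        rw [hB']; simp [Matrix.mul_apply, Fin.sum_univ_four]
      have e01 : B' 0 1 = B 0 1 := by
        rw [hB']; simp [Matrix.mul_apply, Fin.sum_univ_four]
      have e02 : B' 0 2 = B 0 3 + m * B 0 2 := by
        rw [hB']; simp [Matrix.mul_apply, Fin.sum_univ_four]; ring
      have e11 : B' 1 1 = B 1 1 := by
        rw [hB']; simp [Matrix.mul_apply, Fin.sum_univ_four]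
      have e12 : B' 1 2 = B 1 3 + m * B 1 2 := by
        rw [hB']; simp [Matrix.mul_apply, Fin.sum_univ_four]; ring
      have e22 : B' 2 2 = B 3 3 + 2 * m * B 2 3 + m ^ 2 * B 2 2 := by
        rw [hB']; simp [Matrix.mul_apply, Fin.sum_univ_four, h32]; ring
      refine ⟨?_, ?_, ?_⟩
      · unfold mn1; rw [e00]
      · unfold mn2; rw [e00, e01, e11]
      · unfold mn3 mnc mne; rw [e00, e01, e11, e02, e12, e22]; ring
    obtain ⟨e1, e2, e3⟩ := e _ rfl
    rw [e1, e2, e3] at this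
    exact le_of_mul_le_mul_left this (mul_pos p1 p2)

lemma int_interval (S : Finset ℤ) (c r : ℝ) (h : ∀ z ∈ S, ((z : ℝ) + c) ^ 2 ≤ r) :
    (S.card : ℝ) ≤ 2 * Real.sqrt r + 1 := by
  have hsub : S ⊆ Finset.Icc ⌈-Real.sqrt r - c⌉ ⌊Real.sqrt r - c⌋ := by
    intro z hz
    have := abs_le.mp (Real.abs_le_sqrt (h z hz))
    rw [Finset.mem_Icc, Int.ceil_le, Int.le_floor]
    constructor <;> linarith [this.1, this.2]
  have h1 := Finset.card_le_card hsub
  rw [Int.card_Icc] at h1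
  have hs := Real.sqrt_nonneg r
  have h2 : (S.card : ℝ) ≤ ((⌊Real.sqrt r - c⌋ + 1 - ⌈-Real.sqrt r - c⌉).toNat : ℝ) := by
    exact_mod_cast h1
  have f1 := Int.floor_le (Real.sqrt r - c)
  have f2 := Int.le_ceil (-Real.sqrt r - c)
  rcases le_total 0 (⌊Real.sqrt r - c⌋ + 1 - ⌈-Real.sqrt r - c⌉) with h0 | h0
  · have e : (((⌊Real.sqrt r - c⌋ + 1 - ⌈-Real.sqrt r - c⌉).toNat : ℤ) : ℝ) =
      ((⌊Real.sqrt r - c⌋ + 1 - ⌈-Real.sqrt r - c⌉ : ℤ) : ℝ) := by rw [Int.toNat_of_nonneg h0]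
    push_cast at e
    rw [e] at h2
    linarith
  · rw [Int.toNat_of_nonpos h0] at h2
    push_cast at h2
    linarith

lemma fiber_real {α β : Type*} [DecidableEq β] (S : Finset α) (f : α → β) (K : ℝ)
    (hK : ∀ b ∈ S.image f, ((S.filter (fun a => f a = b)).card : ℝ) ≤ K) :
    (S.card : ℝ) ≤ K * ((S.image f).card : ℝ) := by
  rw [Finset.card_eq_sum_card_image f S]
  push_cast
  refine (Finset.sum_le_sum hK).trans_eq ?_
  rw [Finset.sum_const, nsmul_eq_mul, mul_comm]

lemma natcard_le {α : Type*} (P : α → Prop) (b : ℝ) (hb : 0 ≤ b)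
    (h : ∀ S : Finset α, (∀ x ∈ S, P x) → (S.card : ℝ) ≤ b) :
    (Nat.card {x // P x} : ℝ) ≤ b := by
  rcases Set.finite_or_infinite {x | P x} with hf | hf
  · have := h hf.toFinset (fun x hx => by simpa using hx)
    rw [← Set.ncard_eq_toFinset_card _ hf] at this
    exact this
  · have : Infinite {x // P x} := hf.to_subtype
    rw [Nat.card_eq_zero_of_infinite]; simpa using hb

lemma pair_count (T : Finset (ℤ × ℤ)) (d2 d3 d4 c N : ℝ) (h2 : 0 < d2) (h3 : 0 < d3) (h4 : 0 < d4)
    (hT : ∀ p ∈ T, (d3 * p.1 + c * p.2) ^ 2 + d2 * d4 * (p.2 : ℝ) ^ 2 ≤ N * d2 * d3) :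
    (T.card : ℝ) ≤ (2 * Real.sqrt (N * (d2 / d3)) + 1) * (2 * Real.sqrt (N * (d3 / d4)) + 1) := by
  have a := fiber_real T Prod.snd (2 * Real.sqrt (N * (d2 / d3)) + 1) (by
    intro b _
    have inj : Set.InjOn Prod.fst (T.filter (fun a : ℤ × ℤ => a.2 = b) : Set (ℤ × ℤ)) := by
      intro p hp q hq hpq
      simp at hp hq
      exact Prod.ext hpq (hp.2.trans hq.2.symm)
    rw [← Finset.card_image_of_injOn inj]
    refine int_interval _ (c * b / d3) _ ?_
    intro z hz
    rw [Finset.mem_image] at hz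
    obtain ⟨p, hp, rfl⟩ := hz
    rw [Finset.mem_filter] at hp
    have := hT p hp.1
    rw [hp.2] at this
    have e : ((p.1 : ℝ) + c * b / d3) ^ 2 = (d3 * p.1 + c * b) ^ 2 / d3 ^ 2 := by field_simp
    rw [e, div_le_iff₀ (by positivity)]
    have e2 : N * (d2 / d3) * d3 ^ 2 = N * d2 * d3 := by field_simp
    rw [e2]
    have : 0 ≤ d2 * d4 * (b : ℝ) ^ 2 := by positivity
    linarith)
  refine a.trans (mul_le_mul_of_nonneg_left ?_ (by positivity))
  refine int_interval _ 0 _ ?_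
  intro z hz
  rw [Finset.mem_image] at hz
  obtain ⟨p, hp, rfl⟩ := hz
  have := hT p hp
  have e : N * (d3 / d4) = N * d2 * d3 / (d2 * d4) := by field_simp
  rw [e, le_div_iff₀ (by positivity), add_zero]
  nlinarith [sq_nonneg (d3 * p.1 + c * p.2)]

lemma id1 (B : Matrix (Fin 4) (Fin 4) ℤ) (hs : B.IsSymm) (x : Fin 4 → ℤ) :
    (mn2 B * x 1 + (B 0 0 * B 1 2 - B 0 1 * B 0 2) * x 2 + (B 0 0 * B 1 3 - B 0 1 * B 0 3) * x 3) ^ 2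
      + mn2 B * (B 0 0 * x 0 + B 0 1 * x 1 + B 0 2 * x 2 + B 0 3 * x 3) ^ 2
      = mn1 B * mn2 B * (x ⬝ᵥ (B.mulVec x))
        - mn1 B * (mn3 B * x 2 ^ 2 + 2 * mnc B * x 2 * x 3 + mne B * x 3 ^ 2) := by
  rw [qf_expand B hs]
  unfold mn1 mn2 mn3 mnc mne
  ring

lemma form_count (ε K : ℝ) (hε : 0 < ε) (hK1 : 1 ≤ K)
    (hK : ∀ n : ℕ, n ≠ 0 → (n.divisors.card : ℝ) ≤ K * (n : ℝ) ^ (ε / 2))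
    (B : Matrix (Fin 4) (Fin 4) ℤ) (hB : PDZ B) (hdet : 0 < B.det) (n : ℕ) (hn : 0 < n)
    (S : Finset (Fin 4 → ℤ)) (hS : ∀ x ∈ S, x ⬝ᵥ (B.mulVec x) = 2 * n) :
    (S.card : ℝ) ≤ 26 * K ^ 2 * ((2 * n * mn1 B * mn2 B : ℤ) : ℝ) ^ ε *
      ((2 * Real.sqrt (2 * n * (mn2 B / mn3 B)) + 1) *
        (2 * Real.sqrt (2 * n * (mn3 B / B.det)) + 1)) := by
  obtain ⟨p1, p2, p3⟩ := hB.pos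
  have hs := hB.1
  have hid := id1 B hs
  have hdt := det_expand B hs
  have p1r : (0:ℝ) < mn1 B := by exact_mod_cast p1
  have p2r : (0:ℝ) < mn2 B := by exact_mod_cast p2
  have p3r : (0:ℝ) < mn3 B := by exact_mod_cast p3
  have p4r : (0:ℝ) < B.det := by exact_mod_cast hdet
  have hcf : ∀ y z : ℤ, mn3 B * (mn3 B * y ^ 2 + 2 * mnc B * y * z + mne B * z ^ 2)
      = (mn3 B * y + mnc B * z) ^ 2 + mn2 B * B.det * z ^ 2 := by
    intro y z
    rw [← hdt]; ring
  have hcf0 : ∀ y z : ℤ, 0 ≤ mn3 B * y ^ 2 + 2 * mnc B * y * z + mne B * z ^ 2 := by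
    intro y z
    have : 0 ≤ mn3 B * (mn3 B * y ^ 2 + 2 * mnc B * y * z + mne B * z ^ 2) := by
      rw [hcf]; positivity
    exact nonneg_of_mul_nonneg_right this p3
  have hW : (1:ℤ) ≤ 2 * n * mn1 B * mn2 B := by
    have : (0:ℤ) < 2 * n * mn1 B * mn2 B := by positivity
    omega
  have hWr : (1:ℝ) ≤ ((2 * n * mn1 B * mn2 B : ℤ) : ℝ) := by exact_mod_cast hW
  have a := fiber_real S (fun x => (x 2, x 3)) (26 * K ^ 2 * ((2 * n * mn1 B * mn2 B : ℤ) : ℝ) ^ ε) (by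
    rintro ⟨y, z⟩ _
    set F := S.filter (fun x : Fin 4 → ℤ => (x 2, x 3) = (y, z)) with hF
    have hFm : ∀ x ∈ F, x ⬝ᵥ (B.mulVec x) = 2 * n ∧ x 2 = y ∧ x 3 = z := by
      intro x hx
      rw [hF, Finset.mem_filter] at hx
      simp only [Prod.mk.injEq] at hx
      exact ⟨hS x hx.1, hx.2⟩
    set g : (Fin 4 → ℤ) → ℤ × ℤ := fun x =>
      (B 0 0 * x 0 + B 0 1 * x 1 + B 0 2 * x 2 + B 0 3 * x 3,
        mn2 B * x 1 + (B 0 0 * B 1 2 - B 0 1 * B 0 2) * x 2 + (B 0 0 * B 1 3 - B 0 1 * B 0 3) * x 3)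
      with hg
    have inj : Set.InjOn g (F : Set (Fin 4 → ℤ)) := by
      intro u hu v hv huv
      obtain ⟨-, u2, u3⟩ := hFm u hu
      obtain ⟨-, v2, v3⟩ := hFm v hv
      simp only [hg, Prod.mk.injEq, u2, u3, v2, v3] at huv
      have e1 : u 1 = v 1 := by
        apply mul_left_cancel₀ p2.ne'
        linarith [huv.2]
      have e0 : u 0 = v 0 := by
        apply mul_left_cancel₀ p1.ne'
        unfold mn1
        have := huv.1
        rw [e1] at this
        linarith
      funext i
      fin_cases i
      · exact e0
      · exact e1
      · exact u2.trans v2.symm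
      · exact u3.trans v3.symm
    rw [← Finset.card_image_of_injOn inj]
    set M : ℤ := mn1 B * mn2 B * (2 * n)
        - mn1 B * (mn3 B * y ^ 2 + 2 * mnc B * y * z + mne B * z ^ 2) with hM
    have hc := pos_count (mn2 B) M p2 (F.image g) (by
      intro p hp
      rw [Finset.mem_image] at hp
      obtain ⟨x, hx, rfl⟩ := hp
      obtain ⟨q, x2, x3⟩ := hFm x hx
      have := hid x
      rw [q] at this
      rw [hM, ← x2, ← x3, ← this])
    have hMW : M ≤ 2 * n * mn1 B * mn2 B := by
      have := mul_nonneg p1.le (hcf0 y z)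
      rw [hM]; linarith
    rcases (F.image g).eq_empty_or_nonempty with he | ⟨p, hp⟩
    · rw [he]; simp; positivity
    have hM0 : 0 ≤ M := by
      rw [Finset.mem_image] at hp
      obtain ⟨x, hx, rfl⟩ := hp
      obtain ⟨q, x2, x3⟩ := hFm x hx
      have := hid x
      rw [q] at this
      rw [hM, ← x2, ← x3, ← this]
      positivity
    have hc' : ((F.image g).card : ℝ) ≤ 25 * (M.natAbs.divisors.card : ℝ) * M.natAbs.divisors.card + 1 := by
      exact_mod_cast hc
    have hWe : (1:ℝ) ≤ ((2 * n * mn1 B * mn2 B : ℤ) : ℝ) ^ (ε / 2) :=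
      Real.one_le_rpow hWr (by positivity)
    have hdv : (M.natAbs.divisors.card : ℝ) ≤ K * ((2 * n * mn1 B * mn2 B : ℤ) : ℝ) ^ (ε / 2) := by
      rcases Nat.eq_zero_or_pos M.natAbs with h | h
      · rw [h]; simp; positivity
      · refine (hK _ h.ne').trans ?_
        refine mul_le_mul_of_nonneg_left ?_ (by linarith)
        refine Real.rpow_le_rpow (by positivity) ?_ (by positivity)
        have h5 : (M.natAbs : ℤ) ≤ 2 * n * mn1 B * mn2 B := by
          rw [Int.natAbs_of_nonneg hM0]; exact hMW
        have h6 : ((M.natAbs : ℤ) : ℝ) ≤ ((2 * n * mn1 B * mn2 B : ℤ) : ℝ) := Int.cast_le.mpr h5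
        rwa [Int.cast_natCast] at h6
    have hsq : ((2 * n * mn1 B * mn2 B : ℤ) : ℝ) ^ ε = (((2 * n * mn1 B * mn2 B : ℤ) : ℝ) ^ (ε / 2)) ^ 2 := by
      rw [← Real.rpow_natCast, ← Real.rpow_mul (by linarith)]
      congr 1; push_cast; ring
    rw [hsq]
    generalize ((2 * n * mn1 B * mn2 B : ℤ) : ℝ) ^ (ε / 2) = w at *
    have hKw : 1 ≤ K * w := one_le_mul_of_one_le_of_one_le hK1 hWe
    have hd0 : (0:ℝ) ≤ (M.natAbs.divisors.card : ℝ) := Nat.cast_nonneg _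
    generalize (M.natAbs.divisors.card : ℝ) = dd at *
    have : dd * dd ≤ (K * w) * (K * w) := mul_le_mul hdv hdv hd0 (by linarith)
    nlinarith)
  refine a.trans (mul_le_mul_of_nonneg_left ?_ (by positivity))
  refine pair_count _ (mn2 B) (mn3 B) B.det (mnc B) (2 * n) p2r p3r p4r ?_
  intro p hp
  rw [Finset.mem_image] at hp
  obtain ⟨x, hx, rfl⟩ := hp
  have h1 := hid x
  rw [hS x hx] at h1
  have h2 : mn3 B * x 2 ^ 2 + 2 * mnc B * x 2 * x 3 + mne B * x 3 ^ 2 ≤ mn2 B * (2 * n) := by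
    refine le_of_mul_le_mul_left ?_ p1
    have : 0 ≤ (mn2 B * x 1 + (B 0 0 * B 1 2 - B 0 1 * B 0 2) * x 2 + (B 0 0 * B 1 3 - B 0 1 * B 0 3) * x 3) ^ 2
      + mn2 B * (B 0 0 * x 0 + B 0 1 * x 1 + B 0 2 * x 2 + B 0 3 * x 3) ^ 2 := by positivity
    rw [h1] at this
    linarith
  have h3 := mul_le_mul_of_nonneg_left h2 p3.le
  rw [hcf] at h3
  have h4 : (mn3 B * x 2 + mnc B * x 3) ^ 2 + mn2 B * B.det * x 3 ^ 2 ≤ 2 * n * mn2 B * mn3 B := by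
    linarith
  exact_mod_cast h4

lemma final_ineq (d1 d2 d3 d4 n : ℝ) (h1 : 1 ≤ d1) (h2 : 1 ≤ d2) (h3 : 1 ≤ d3) (h4 : 1 ≤ d4)
    (hn : 1 ≤ n) (r1 : 3 * d1 ^ 2 ≤ 4 * d2) (r2 : 3 * d2 ^ 2 ≤ 4 * (d1 * d3))
    (r3 : 3 * d3 ^ 2 ≤ 4 * (d2 * d4)) :
    2 * n * d1 * d2 ≤ 16 * (n * d4) ∧
    (2 * Real.sqrt (2 * n * (d2 / d3)) + 1) * (2 * Real.sqrt (2 * n * (d3 / d4)) + 1)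
      ≤ 13 * (n * d4 ^ (-(1:ℝ)/4) + n ^ ((1:ℝ)/2)) := by
  have k1 : d2 ^ 2 ≤ 4 * d4 := by
    have a : (3 * d2 ^ 2) ^ 2 ≤ (4 * (d1 * d3)) ^ 2 := pow_le_pow_left₀ (by positivity) r2 2
    have b : (3 * d1 ^ 2) * (3 * d3 ^ 2) ≤ (4 * d2) * (4 * (d2 * d4)) :=
      mul_le_mul r1 r3 (by positivity) (by positivity)
    have c : d2 ^ 2 * (81 * d2 ^ 2) ≤ d2 ^ 2 * (256 * d4) := by nlinarith
    have := le_of_mul_le_mul_left c (by positivity)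
    nlinarith
  have k2 : d1 ≤ 2 * d2 := by nlinarith
  have k3 : d1 * d2 ≤ 8 * d4 := by nlinarith
  refine ⟨by nlinarith, ?_⟩
  have l1 : 3 * d1 ≤ 4 * d2 := by nlinarith
  have l2 : d2 / d3 ≤ 2 := by
    rw [div_le_iff₀ (by linarith)]
    have : d2 * (9 * d2) ≤ d2 * (16 * d3) := by nlinarith
    have := le_of_mul_le_mul_left this (by linarith)
    linarith
  have l3 : d3 / d4 ≤ 3 := by
    rw [div_le_iff₀ (by linarith)]
    have l2' := (div_le_iff₀ (by linarith)).mp l2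
    have : d3 * (3 * d3) ≤ d3 * (8 * d4) := by nlinarith
    have := le_of_mul_le_mul_left this (by linarith)
    linarith
  have hsn : n ^ ((1:ℝ)/2) = Real.sqrt n := (Real.sqrt_eq_rpow n).symm
  have hd : d4 ^ (-(1:ℝ)/4) = (Real.sqrt (Real.sqrt d4))⁻¹ := by
    rw [Real.sqrt_eq_rpow, Real.sqrt_eq_rpow, ← Real.rpow_mul (by linarith),
      ← Real.rpow_neg (by linarith)]
    norm_num
  rw [hsn, hd]
  have s1 : Real.sqrt (2 * n * (d2 / d3)) ≤ 3 * Real.sqrt n := by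
    rw [Real.sqrt_le_left (by positivity), mul_pow, Real.sq_sqrt (by linarith)]
    nlinarith
  have s2 : Real.sqrt (2 * n * (d3 / d4)) ≤ 3 * Real.sqrt n := by
    rw [Real.sqrt_le_left (by positivity), mul_pow, Real.sq_sqrt (by linarith)]
    nlinarith
  have s3 : Real.sqrt (2 * n * (d2 / d3)) * Real.sqrt (2 * n * (d3 / d4))
      ≤ 3 * (n * (Real.sqrt (Real.sqrt d4))⁻¹) := by
    rw [← Real.sqrt_mul (by positivity), Real.sqrt_le_left (by positivity), mul_pow, mul_pow, inv_pow,
      Real.sq_sqrt (by positivity)]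
    have e : 2 * n * (d2 / d3) * (2 * n * (d3 / d4)) = 4 * n ^ 2 * (d2 / d4) := by
      field_simp; ring
    rw [e]
    have hq : 0 < Real.sqrt d4 := Real.sqrt_pos.mpr (by linarith)
    have hqq : Real.sqrt d4 * Real.sqrt d4 = d4 := Real.mul_self_sqrt (by linarith)
    have f : d2 / d4 ≤ 2 * (Real.sqrt d4)⁻¹ := by
      rw [div_le_iff₀ (by linarith)]
      have : 2 * (Real.sqrt d4)⁻¹ * d4 = 2 * Real.sqrt d4 := by
        have e5 : (Real.sqrt d4)⁻¹ * Real.sqrt d4 = 1 := inv_mul_cancel₀ hq.ne'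
        linear_combination 2 * Real.sqrt d4 * e5 - 2 * (Real.sqrt d4)⁻¹ * hqq
      rw [this]
      nlinarith
    have := mul_le_mul_of_nonneg_left f (show 0 ≤ 4 * n ^ 2 by positivity)
    have : 0 ≤ n ^ 2 * (Real.sqrt d4)⁻¹ := by positivity
    nlinarith
  have s4 : 1 ≤ Real.sqrt n := Real.one_le_sqrt.mpr hn
  have s5 : 0 ≤ n * (Real.sqrt (Real.sqrt d4))⁻¹ := by positivity
  nlinarith

lemma qval_eq (A : Matrix (Fin 4) (Fin 4) ℤ) (hA : IsGram A) (x : Fin 4 → ℤ) :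
    x ⬝ᵥ (A.mulVec x) = 2 * Qval A x := by
  rw [qf_expand A hA.1]
  have i0 : (Finset.Ioi (0 : Fin 4)) = {1, 2, 3} := by decide
  have i1 : (Finset.Ioi (1 : Fin 4)) = {2, 3} := by decide
  have i2 : (Finset.Ioi (2 : Fin 4)) = {3} := by decide
  have i3 : (Finset.Ioi (3 : Fin 4)) = ∅ := by decide
  obtain ⟨a, ha⟩ := hA.2 0
  obtain ⟨b, hb⟩ := hA.2 1
  obtain ⟨c, hc⟩ := hA.2 2
  obtain ⟨d, hd⟩ := hA.2 3
  unfold Qval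
  simp only [Fin.sum_univ_four, i0, i1, i2, i3]
  rw [ha, hb, hc, hd]
  simp
  ring

lemma pdz_of (A : Matrix (Fin 4) (Fin 4) ℤ) (hA : IsGram A) (hP : PosDefQF A) : PDZ A := by
  refine ⟨hA.1, fun x hx => ?_⟩
  have hx' : (fun i => (x i : ℝ)) ≠ 0 := by
    intro h; apply hx; funext i
    have := congrFun h i
    simpa using this
  have := Matrix.PosDef.dotProduct_mulVec_pos hP hx'
  have e : star (fun i => (x i : ℝ)) ⬝ᵥ (A.map (Int.cast : ℤ → ℝ)).mulVec (fun i => (x i : ℝ))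
      = ((x ⬝ᵥ (A.mulVec x) : ℤ) : ℝ) := by
    simp [dotProduct, Matrix.mulVec]
  rw [e] at this
  exact_mod_cast this

lemma det_pos_of (A : Matrix (Fin 4) (Fin 4) ℤ) (hP : PosDefQF A) : 0 < A.det := by
  have h := Matrix.PosDef.det_pos hP
  have e : (A.map (Int.cast : ℤ → ℝ)).det = (A.det : ℝ) := (Int.cast_det A).symm
  rw [e] at h
  exact_mod_cast h

/-- Pointwise bound: `r_R(n) ≪ n^{1+ε} D(R)^{-1/4+ε} + n^{1/2} (n D(R))^ε`. -/
theorem repCount_bound :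
    ∀ ε : ℝ, 0 < ε → ∃ C : ℝ, 0 < C ∧
      ∀ (A : Matrix (Fin 4) (Fin 4) ℤ) (n : ℕ),
        IsGram A → PosDefQF A → 0 < n →
        (repCount A n : ℝ) ≤
          C * ((n : ℝ) ^ ((1:ℝ) + ε) * (A.det : ℝ) ^ (-(1:ℝ)/4 + ε) +
            (n : ℝ) ^ ((1:ℝ)/2) * ((n : ℝ) * (A.det : ℝ)) ^ ε) := by
  intro ε hε
  obtain ⟨K, hK1, hK⟩ := div_bound (ε / 2) (by positivity)
  refine ⟨26 * K ^ 2 * 16 ^ ε * 13, by positivity, ?_⟩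
  intro A n hG hP hn
  have hdet := det_pos_of A hP
  have hA := pdz_of A hG hP
  obtain ⟨U, hU, B, hBU, r1, r2, r3⟩ := reduce A hA
  have hB : PDZ B := by rw [hBU]; exact hA.conj U hU
  have hBdet : B.det = A.det := by
    rw [hBU, Matrix.det_mul, Matrix.det_mul, Matrix.det_transpose]
    rcases Int.isUnit_iff.mp hU with h | h <;> rw [h] <;> ring
  rw [hBdet] at r3
  obtain ⟨p1, p2, p3⟩ := hB.pos
  have hn1 : (1:ℝ) ≤ n := by exact_mod_cast hn
  have hD1 : (1:ℝ) ≤ A.det := by exact_mod_cast hdet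
  obtain ⟨f1, f2⟩ := final_ineq (mn1 B) (mn2 B) (mn3 B) A.det n (by exact_mod_cast p1)
    (by exact_mod_cast p2) (by exact_mod_cast p3) hD1 hn1
    (by exact_mod_cast r1) (by exact_mod_cast r2) (by exact_mod_cast r3)
  have p1r : (0:ℝ) < mn1 B := by exact_mod_cast p1
  have p2r : (0:ℝ) < mn2 B := by exact_mod_cast p2
  have hnD : (0:ℝ) < n * A.det := by positivity
  have hrhs : (n : ℝ) ^ ((1:ℝ) + ε) * (A.det : ℝ) ^ (-(1:ℝ)/4 + ε) +
            (n : ℝ) ^ ((1:ℝ)/2) * ((n : ℝ) * (A.det : ℝ)) ^ ε =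
      ((n : ℝ) * (A.det : ℝ)) ^ ε * ((n:ℝ) * (A.det : ℝ) ^ (-(1:ℝ)/4) + (n:ℝ) ^ ((1:ℝ)/2)) := by
    rw [Real.rpow_add (by linarith), Real.rpow_add (by linarith), Real.rpow_one,
      Real.mul_rpow (by linarith) (by linarith)]
    ring
  rw [hrhs]
  unfold repCount
  refine natcard_le _ _ (by positivity) ?_
  intro S hS
  -- transport along the change of basis
  have hU' : IsUnit U.det := hU
  set V := U⁻¹ with hV
  have hUV : U * V = 1 := Matrix.mul_nonsing_inv U hU'
  have inj : Set.InjOn (fun x => V.mulVec x) (S : Set (Fin 4 → ℤ)) := by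
    intro x _ y _ hxy
    have := congrArg (fun z => U.mulVec z) hxy
    simpa [Matrix.mulVec_mulVec, hUV] using this
  rw [← Finset.card_image_of_injOn inj]
  have hc := form_count ε K hε hK1 hK B hB (by rw [hBdet]; exact hdet) n hn
    (S.image (fun x => V.mulVec x)) (by
      intro y hy
      rw [Finset.mem_image] at hy
      obtain ⟨x, hx, rfl⟩ := hy
      have e : (V.mulVec x) ⬝ᵥ (B.mulVec (V.mulVec x)) = x ⬝ᵥ (A.mulVec x) := by
        rw [hBU, ← Matrix.mulVec_mulVec, ← Matrix.mulVec_mulVec, Matrix.dotProduct_mulVec,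
          Matrix.vecMul_transpose, Matrix.mulVec_mulVec, hUV, Matrix.one_mulVec]
      rw [e, qval_eq A hG, hS x hx])
  rw [hBdet] at hc
  refine hc.trans ?_
  have hW : ((2 * n * mn1 B * mn2 B : ℤ) : ℝ) ^ ε ≤ 16 ^ ε * ((n : ℝ) * (A.det : ℝ)) ^ ε := by
    rw [← Real.mul_rpow (by norm_num) hnD.le]
    refine Real.rpow_le_rpow ?_ ?_ hε.le
    · push_cast; positivity
    · refine le_trans (le_of_eq ?_) f1
      simp only [Int.cast_mul, Int.cast_ofNat, Int.cast_natCast]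
  calc _ ≤ 26 * K ^ 2 * (16 ^ ε * ((n : ℝ) * (A.det : ℝ)) ^ ε) *
        (13 * ((n:ℝ) * (A.det : ℝ) ^ (-(1:ℝ)/4) + (n:ℝ) ^ ((1:ℝ)/2))) := by
        refine mul_le_mul (mul_le_mul_of_nonneg_left hW (by positivity)) f2 (by positivity) (by positivity)
    _ = _ := by ring
end

section
/- For every ε > 0 there exists a constant C = C(ε) > 0 such that for every positive-definite quaternary integer-valued quadratic form R with discriminant D(R) and every real x ≥ 1, the sum of squared representation numbers satisfies ∑_{1 ≤ n ≤ x} r_R(n)² ≤ C · (x·D(R))^ε · ( x³ · D(R)^(−3/4) + x^(5/2) · D(R)^(−1/4) + x² ). -/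
open scoped BigOperators

/-! ### The divisor bound -/

lemma aux_local_bound (ε : ℝ) (hε : 0 < ε) :
    ∃ K : ℝ, 1 ≤ K ∧ ∀ (p k : ℕ), 2 ≤ p → ((k : ℝ) + 1) ≤ K * ((p : ℝ) ^ k) ^ ε := by
  have hl : 0 < Real.log 2 := Real.log_pos (by norm_num)
  refine ⟨1 + 1 / (ε * Real.log 2), by
    have : 0 < 1 / (ε * Real.log 2) := by positivity
    linarith, ?_⟩
  intro p k hp
  have h1 : ((2:ℝ) ^ k) ^ ε ≤ ((p : ℝ) ^ k) ^ ε := by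
    have : (2:ℝ) ≤ p := by exact_mod_cast hp
    gcongr
  have h2 : 1 + k * (ε * Real.log 2) ≤ ((2:ℝ) ^ k) ^ ε := by
    rw [Real.rpow_def_of_pos (by positivity), Real.log_pow]
    have := Real.add_one_le_exp ((k : ℝ) * Real.log 2 * ε)
    linarith
  have h3 : (0:ℝ) ≤ k := Nat.cast_nonneg k
  have hc : 0 < ε * Real.log 2 := by positivity
  have hK : 0 ≤ 1 + 1 / (ε * Real.log 2) := by positivity
  calc (k : ℝ) + 1 ≤ (1 + 1 / (ε * Real.log 2)) * (1 + k * (ε * Real.log 2)) := by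
        have : (1 + 1 / (ε * Real.log 2)) * (1 + k * (ε * Real.log 2))
          = 1 + k + k * (ε * Real.log 2) + 1 / (ε * Real.log 2) := by
          field_simp
          ring
        rw [this]
        have : 0 < 1 / (ε * Real.log 2) := by positivity
        have : 0 ≤ k * (ε * Real.log 2) := by positivity
        linarith
    _ ≤ _ := by gcongr; linarith

lemma aux_divisor_bound (ε : ℝ) (hε : 0 < ε) :
    ∃ C : ℝ, 1 ≤ C ∧ ∀ n : ℕ, n ≠ 0 → ((n.divisors.card : ℕ) : ℝ) ≤ C * (n : ℝ) ^ ε := by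
  obtain ⟨K, hK1, hK⟩ := aux_local_bound ε hε
  obtain ⟨P, hP⟩ := exists_nat_ge ((2:ℝ) ^ (1 / ε))
  refine ⟨K ^ P, one_le_pow₀ hK1, ?_⟩
  intro n hn
  have hn' : (n : ℝ) ^ ε = ∏ p ∈ n.primeFactors, ((p : ℝ) ^ (n.factorization p)) ^ ε := by
    rw [Real.finsetProd_rpow _ _ (fun i _ => by positivity)]
    congr 1
    conv_lhs => rw [← Nat.prod_factorization_pow_eq_self hn]
    rw [Finsupp.prod]
    push_cast
    rfl
  rw [Nat.card_divisors hn, hn']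
  push_cast
  have hstep : ∀ p ∈ n.primeFactors, ((n.factorization p : ℝ) + 1) ≤
      (if p < P then K else 1) * ((p : ℝ) ^ (n.factorization p)) ^ ε := by
    intro p hp
    have hp2 : 2 ≤ p := (Nat.prime_of_mem_primeFactors hp).two_le
    split_ifs with h
    · exact hK p _ hp2
    · rw [one_mul]
      have h1 : (2:ℝ) ≤ (p:ℝ) ^ ε := by
        have h2 : (2:ℝ) ^ (1 / ε) ≤ p := hP.trans (by exact_mod_cast (not_lt.mp h))
        calc (2:ℝ) = ((2:ℝ) ^ (1 / ε)) ^ ε := by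
              rw [← Real.rpow_mul (by norm_num)]
              field_simp
              simp
          _ ≤ _ := by gcongr
      rw [← Real.rpow_natCast, ← Real.rpow_mul (by positivity), mul_comm,
        Real.rpow_mul (by positivity), Real.rpow_natCast]
      calc ((n.factorization p : ℝ) + 1) ≤ (2:ℝ) ^ (n.factorization p) := by
            exact_mod_cast Nat.lt_two_pow_self
        _ ≤ _ := by gcongr
  refine (Finset.prod_le_prod (fun i _ => by positivity) hstep).trans ?_
  rw [Finset.prod_mul_distrib]
  gcongr
  rw [Finset.prod_ite, Finset.prod_const, Finset.prod_const_one, mul_one]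
  refine pow_le_pow_right₀ hK1 ?_
  calc _ ≤ (Finset.range P).card := Finset.card_le_card (by
        intro p hp
        simp only [Finset.mem_filter] at hp
        exact Finset.mem_range.mpr hp.2)
    _ = P := Finset.card_range P

/-! ### Representations by `u² + Δ v²` -/

lemma aux_class (Δ M : ℤ) (hΔ : 0 < Δ) (hM : 0 < M) (T : Finset (ℤ × ℤ)) (u₂ v₂ : ℤ)
    (h₂ : u₂ ^ 2 + Δ * v₂ ^ 2 = M)
    (hT : ∀ z ∈ T, z.1 ^ 2 + Δ * z.2 ^ 2 = M ∧ M ∣ 2 * (u₂ * z.2 - z.1 * v₂)) :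
    T.card ≤ 10 := by
  let f : ℤ × ℤ → ℤ × Bool := fun z =>
    (2 * (u₂ * z.2 - z.1 * v₂) / M, decide (0 ≤ u₂ * z.1 + Δ * z.2 * v₂))
  have hmaps : Set.MapsTo f T ((Finset.Icc (-2 : ℤ) 2) ×ˢ (Finset.univ : Finset Bool) :
      Finset (ℤ × Bool)) := by
    intro z hz
    obtain ⟨h1, j, hj⟩ := hT z hz
    have hf : (f z).1 = j := by
      simp only [f]
      rw [hj, Int.mul_ediv_cancel_left _ hM.ne']
    have key : (u₂ * z.1 + Δ * z.2 * v₂) ^ 2 + Δ * (u₂ * z.2 - z.1 * v₂) ^ 2 = M ^ 2 := by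
      have : M ^ 2 = (z.1 ^ 2 + Δ * z.2 ^ 2) * (u₂ ^ 2 + Δ * v₂ ^ 2) := by rw [h1, h₂]; ring
      rw [this]; ring
    have h4 : (M * j) ^ 2 ≤ 4 * M ^ 2 := by
      rw [← hj]
      nlinarith [sq_nonneg (u₂ * z.1 + Δ * z.2 * v₂), sq_nonneg (u₂ * z.2 - z.1 * v₂)]
    have h5 : j ^ 2 ≤ 2 ^ 2 := by
      have hMM : 0 < M ^ 2 := by positivity
      by_contra hcon
      push Not at hcon
      nlinarith
    have h6 := abs_le_of_sq_le_sq' h5 (by norm_num)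
    simp only [Finset.coe_product, Set.mem_prod, Finset.mem_coe, Finset.mem_Icc, Finset.mem_univ,
      and_true, hf]
    exact h6
  have hinj : Set.InjOn f T := by
    intro z hz w hw hzw
    obtain ⟨hz1, j, hj⟩ := hT z hz
    obtain ⟨hw1, k, hk⟩ := hT w hw
    simp only [f, Prod.mk.injEq] at hzw
    obtain ⟨hjk, hs⟩ := hzw
    rw [hj, hk, Int.mul_ediv_cancel_left _ hM.ne', Int.mul_ediv_cancel_left _ hM.ne'] at hjk
    subst hjk
    have hW : u₂ * z.2 - z.1 * v₂ = u₂ * w.2 - w.1 * v₂ := by linarith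
    have keyz : (u₂ * z.1 + Δ * z.2 * v₂) ^ 2 + Δ * (u₂ * z.2 - z.1 * v₂) ^ 2 = M ^ 2 := by
      have : M ^ 2 = (z.1 ^ 2 + Δ * z.2 ^ 2) * (u₂ ^ 2 + Δ * v₂ ^ 2) := by rw [hz1, h₂]; ring
      rw [this]; ring
    have keyw : (u₂ * w.1 + Δ * w.2 * v₂) ^ 2 + Δ * (u₂ * w.2 - w.1 * v₂) ^ 2 = M ^ 2 := by
      have : M ^ 2 = (w.1 ^ 2 + Δ * w.2 ^ 2) * (u₂ ^ 2 + Δ * v₂ ^ 2) := by rw [hw1, h₂]; ring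
      rw [this]; ring
    rw [hW] at keyz
    have hP2 : (u₂ * z.1 + Δ * z.2 * v₂) ^ 2 = (u₂ * w.1 + Δ * w.2 * v₂) ^ 2 := by linarith
    have hs' : (0 ≤ u₂ * z.1 + Δ * z.2 * v₂) ↔ (0 ≤ u₂ * w.1 + Δ * w.2 * v₂) := by
      simpa using hs
    have hP : u₂ * z.1 + Δ * z.2 * v₂ = u₂ * w.1 + Δ * w.2 * v₂ := by
      rcases sq_eq_sq_iff_eq_or_eq_neg.mp hP2 with h | h
      · exact h
      · by_cases h0 : 0 ≤ u₂ * z.1 + Δ * z.2 * v₂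
        · have := hs'.mp h0
          omega
        · have := mt hs'.mpr h0
          omega
    have e1 : M * z.1 = M * w.1 := by
      rw [← h₂]
      linear_combination u₂ * hP - Δ * v₂ * hW
    have e2 : M * z.2 = M * w.2 := by
      rw [← h₂]
      linear_combination u₂ * hW + v₂ * hP
    exact Prod.ext (mul_left_cancel₀ hM.ne' e1) (mul_left_cancel₀ hM.ne' e2)
  calc T.card ≤ _ := Finset.card_le_card_of_injOn f hmaps hinj
    _ = 10 := by simp [Finset.card_product]

lemma aux_coprime_right {Δ M u v : ℤ} (h : u ^ 2 + Δ * v ^ 2 = M) (hc : IsCoprime u v) :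
    IsCoprime M v := by
  have : IsCoprime (u ^ 2) v := hc.pow_left
  have e : M = u ^ 2 + v * (Δ * v) := by rw [← h]; ring
  rw [e]
  exact this.add_mul_left_left (Δ * v)

lemma aux_e_dvd_two {Δ M u₀ v₀ u v e : ℤ} (hsq : Squarefree Δ)
    (h0 : u₀ ^ 2 + Δ * v₀ ^ 2 = M) (h1 : u ^ 2 + Δ * v ^ 2 = M)
    (hc0 : IsCoprime u₀ v₀) (hc : IsCoprime u v)
    (he1 : e ∣ 2 * (u₀ * v)) (heM : e ^ 2 ∣ M) : e ∣ 2 := by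
  have heM' : e ∣ M := (dvd_pow_self e two_ne_zero).trans heM
  have c1 : IsCoprime e v := (aux_coprime_right h1 hc).of_isCoprime_of_dvd_left heM'
  have c0 : IsCoprime e v₀ := (aux_coprime_right h0 hc0).of_isCoprime_of_dvd_left heM'
  have d1 : e ∣ 2 * u₀ := by
    refine c1.dvd_of_dvd_mul_right ?_
    rwa [mul_assoc]
  have d2 : e ^ 2 ∣ 4 * u₀ ^ 2 := by
    have := pow_dvd_pow_of_dvd d1 2
    rwa [show (2 * u₀) ^ 2 = 4 * u₀ ^ 2 by ring] at this
  have d3 : e ^ 2 ∣ (4 * Δ) * v₀ ^ 2 := by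
    have h3 : (4 * Δ) * v₀ ^ 2 = 4 * M - 4 * u₀ ^ 2 := by rw [← h0]; ring
    rw [h3]
    exact dvd_sub (heM.mul_left 4) d2
  have d4 : e ^ 2 ∣ 4 * Δ := (c0.pow (m := 2) (n := 2)).dvd_of_dvd_mul_right d3
  -- split according to the parity of e
  rcases Int.even_or_odd e with ⟨k, hk⟩ | hodd
  · have hk' : e = 2 * k := by omega
    subst hk'
    have : k * k ∣ Δ := by
      have h5 : 4 * (k * k) ∣ 4 * Δ := by
        rwa [show (2 * k) ^ 2 = 4 * (k * k) by ring] at d4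
      exact (mul_dvd_mul_iff_left (by norm_num)).mp h5
    have hu := hsq k this
    have hu1 : k ∣ 1 := hu.dvd
    simpa using mul_dvd_mul_left 2 hu1
  · have c2 : IsCoprime (e ^ 2) (4 : ℤ) := by
      have : IsCoprime e 2 := by
        rw [Int.isCoprime_iff_gcd_eq_one]
        have := Int.isCoprime_two_right.mpr hodd
        exact Int.isCoprime_iff_gcd_eq_one.mp this
      have := this.pow (m := 2) (n := 2)
      simpa using this
    have : e * e ∣ Δ := by
      have := c2.dvd_of_dvd_mul_left d4
      rwa [sq] at this
    exact (hsq e this).dvd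

lemma aux_primitive (Δ M : ℤ) (hΔ : 0 < Δ) (hM : 0 < M) (hsq : Squarefree Δ)
    (T : Finset (ℤ × ℤ))
    (hT : ∀ z ∈ T, z.1 ^ 2 + Δ * z.2 ^ 2 = M ∧ IsCoprime z.1 z.2) :
    T.card ≤ 10 * M.natAbs.divisors.card := by
  rcases T.eq_empty_or_nonempty with rfl | ⟨⟨u₀, v₀⟩, hz0⟩
  · simp
  obtain ⟨h0, hc0⟩ := hT _ hz0
  simp only at h0 hc0
  refine Finset.card_le_mul_card_image_of_maps_to
    (f := fun z : ℤ × ℤ => Int.gcd (u₀ * z.2 - z.1 * v₀) M) ?_ 10 ?_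
  · intro z hz
    rw [Nat.mem_divisors]
    refine ⟨?_, by omega⟩
    exact Int.natAbs_dvd_natAbs.mpr (Int.gcd_dvd_right _ _) |>.trans (dvd_refl _) |> fun h => by
      simpa using h
  · intro g hg
    rcases (T.filter fun z : ℤ × ℤ => Int.gcd (u₀ * z.2 - z.1 * v₀) M = g).eq_empty_or_nonempty
      with he | ⟨⟨u₂, v₂⟩, hz2⟩
    · rw [he]; simp
    rw [Finset.mem_filter] at hz2
    obtain ⟨hz2, hg2⟩ := hz2
    obtain ⟨h2, hc2⟩ := hT _ hz2
    simp only at h2 hc2 hg2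
    -- general facts for members of the class
    have hgM : (g : ℤ) ∣ M := by rw [← hg2]; exact Int.gcd_dvd_right _ _
    obtain ⟨m, hm⟩ := hgM
    have hg0 : (g : ℤ) ≠ 0 := by
      intro h; rw [h, zero_mul] at hm; omega
    have fact : ∀ u v : ℤ, u ^ 2 + Δ * v ^ 2 = M → Int.gcd (u₀ * v - u * v₀) M = g →
        (g : ℤ) ∣ (u₀ * v - u * v₀) ∧ m ∣ (u₀ * v + u * v₀) := by
      intro u v h hgg
      have a1 : (g : ℤ) ∣ (u₀ * v - u * v₀) := by rw [← hgg]; exact Int.gcd_dvd_left _ _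
      refine ⟨a1, ?_⟩
      obtain ⟨s, hs⟩ := a1
      have hcop : IsCoprime s m := by
        rw [Int.isCoprime_iff_gcd_eq_one]
        rw [hs, hm, Int.gcd_mul_left] at hgg
        have hgn : g ≠ 0 := by exact_mod_cast hg0
        simp only [Int.natAbs_natCast] at hgg
        exact Nat.eq_of_mul_eq_mul_left (Nat.pos_of_ne_zero hgn) (by rw [hgg, mul_one])
      have hprod : M ∣ (u₀ * v - u * v₀) * (u₀ * v + u * v₀) := by
        refine ⟨v ^ 2 - v₀ ^ 2, ?_⟩
        linear_combination v ^ 2 * h0 - v₀ ^ 2 * h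
      rw [hs, hm, mul_assoc] at hprod
      have := (mul_dvd_mul_iff_left hg0).mp hprod
      exact hcop.symm.dvd_of_dvd_mul_left this
    obtain ⟨f2a, f2b⟩ := fact u₂ v₂ h2 hg2
    refine aux_class Δ M hΔ hM _ u₂ v₂ h2 ?_
    rintro ⟨u, v⟩ hz
    rw [Finset.mem_filter] at hz
    obtain ⟨hz, hgz⟩ := hz
    obtain ⟨h1, hc⟩ := hT _ hz
    simp only at h1 hc hgz ⊢
    refine ⟨h1, ?_⟩
    obtain ⟨fa, fb⟩ := fact u v h1 hgz
    have W1 : (g : ℤ) ∣ u₂ * v - u * v₂ := by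
      have A1 : (g : ℤ) ∣ u₀ * (u₂ * v - u * v₂) := by
        have : u₀ * (u₂ * v - u * v₂) = u₂ * (u₀ * v - u * v₀) - u * (u₀ * v₂ - u₂ * v₀) := by ring
        rw [this]
        exact dvd_sub (fa.mul_left _) (f2a.mul_left _)
      have A2 : (g : ℤ) ∣ v₀ * (u₂ * v - u * v₂) := by
        have : v₀ * (u₂ * v - u * v₂) = v₂ * (u₀ * v - u * v₀) - v * (u₀ * v₂ - u₂ * v₀) := by ring
        rw [this]
        exact dvd_sub (fa.mul_left _) (f2a.mul_left _)
      obtain ⟨a, b, hab⟩ := hc0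
      have : u₂ * v - u * v₂ = a * (u₀ * (u₂ * v - u * v₂)) + b * (v₀ * (u₂ * v - u * v₂)) := by
        linear_combination (-(u₂ * v - u * v₂)) * hab
      rw [this]
      exact dvd_add (A1.mul_left _) (A2.mul_left _)
    have W2 : m ∣ u₂ * v - u * v₂ := by
      have A1 : m ∣ u₀ * (u₂ * v - u * v₂) := by
        have : u₀ * (u₂ * v - u * v₂) = u₂ * (u₀ * v + u * v₀) - u * (u₀ * v₂ + u₂ * v₀) := by ring
        rw [this]
        exact dvd_sub (fb.mul_left _) (f2b.mul_left _)
      have A2 : m ∣ v₀ * (u₂ * v - u * v₂) := by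
        have : v₀ * (u₂ * v - u * v₂) = v * (u₀ * v₂ + u₂ * v₀) - v₂ * (u₀ * v + u * v₀) := by ring
        rw [this]
        exact dvd_sub (f2b.mul_left _) (fb.mul_left _)
      obtain ⟨a, b, hab⟩ := hc0
      have : u₂ * v - u * v₂ = a * (u₀ * (u₂ * v - u * v₂)) + b * (v₀ * (u₂ * v - u * v₂)) := by
        linear_combination (-(u₂ * v - u * v₂)) * hab
      rw [this]
      exact dvd_add (A1.mul_left _) (A2.mul_left _)
    -- gcd of `g` and `m` divides two
    set e : ℤ := (Int.gcd g m : ℤ) with he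
    have eg : e ∣ (g : ℤ) := Int.gcd_dvd_left _ _
    have em : e ∣ m := Int.gcd_dvd_right _ _
    have e2 : e ∣ 2 := by
      refine aux_e_dvd_two hsq h0 h1 hc0 hc ?_ ?_
      · have : 2 * (u₀ * v) = (u₀ * v - u * v₀) + (u₀ * v + u * v₀) := by ring
        rw [this]
        exact dvd_add (eg.trans fa) (em.trans fb)
      · rw [hm, sq]
        exact mul_dvd_mul eg em
    -- Bezout
    have hbez : e = g * Int.gcdA g m + m * Int.gcdB g m := Int.gcd_eq_gcd_ab _ _
    obtain ⟨k, hk⟩ := e2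
    have : 2 * (u₂ * v - u * v₂) = k * Int.gcdA g m * (g * (u₂ * v - u * v₂))
        + k * Int.gcdB g m * (m * (u₂ * v - u * v₂)) := by
      linear_combination (u₂ * v - u * v₂) * hk + k * (u₂ * v - u * v₂) * hbez
    rw [this, hm]
    refine dvd_add (Dvd.dvd.mul_left ?_ _) (Dvd.dvd.mul_left ?_ _)
    · exact mul_dvd_mul_left _ W2
    · rw [mul_comm (g : ℤ) m]
      exact mul_dvd_mul_left _ W1

lemma aux_squarefree (Δ M : ℤ) (hΔ : 0 < Δ) (hM : 0 < M) (hsq : Squarefree Δ)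
    (T : Finset (ℤ × ℤ)) (hT : ∀ z ∈ T, z.1 ^ 2 + Δ * z.2 ^ 2 = M) :
    T.card ≤ (10 * M.natAbs.divisors.card) * M.natAbs.divisors.card := by
  refine Finset.card_le_mul_card_image_of_maps_to
    (f := fun z : ℤ × ℤ => Int.gcd z.1 z.2) ?_ _ ?_
  · intro z hz
    rw [Nat.mem_divisors]
    refine ⟨?_, by omega⟩
    have h1 : (Int.gcd z.1 z.2 : ℤ) ∣ M := by
      rw [← hT z hz]
      exact dvd_add (dvd_pow (Int.gcd_dvd_left _ _) two_ne_zero)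
        ((dvd_pow (Int.gcd_dvd_right _ _) two_ne_zero).mul_left _)
    exact Int.natCast_dvd.mp h1
  · intro k hk
    rw [Nat.mem_divisors] at hk
    have hk0 : k ≠ 0 := by
      rintro rfl
      have := Nat.eq_zero_of_zero_dvd hk.1
      omega
    have hk0' : (k : ℤ) ≠ 0 := by exact_mod_cast hk0
    set S := T.filter fun z : ℤ × ℤ => Int.gcd z.1 z.2 = k with hS
    have hmem : ∀ z ∈ S, ∃ a b : ℤ, z = (k * a, k * b) ∧ IsCoprime a b ∧
        (k:ℤ) ^ 2 * (a ^ 2 + Δ * b ^ 2) = M := by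
      intro z hz
      rw [hS, Finset.mem_filter] at hz
      obtain ⟨hzT, hg⟩ := hz
      have h1 : (k : ℤ) ∣ z.1 := by rw [← hg]; exact Int.gcd_dvd_left _ _
      have h2 : (k : ℤ) ∣ z.2 := by rw [← hg]; exact Int.gcd_dvd_right _ _
      obtain ⟨a, ha⟩ := h1
      obtain ⟨b, hb⟩ := h2
      refine ⟨a, b, Prod.ext ha hb, ?_, ?_⟩
      · rw [Int.isCoprime_iff_gcd_eq_one]
        rw [ha, hb, Int.gcd_mul_left, Int.natAbs_natCast] at hg
        exact Nat.eq_of_mul_eq_mul_left (Nat.pos_of_ne_zero hk0) (by rw [hg, mul_one])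
      · rw [← hT z hzT, ha, hb]; ring
    rcases S.eq_empty_or_nonempty with he | ⟨z0, hz0⟩
    · rw [he]; simp
    obtain ⟨a0, b0, -, -, hM0⟩ := hmem z0 hz0
    set M' : ℤ := a0 ^ 2 + Δ * b0 ^ 2 with hM'
    have hM'pos : 0 < M' := by
      have : 0 < (k:ℤ) ^ 2 := by positivity
      by_contra hcon
      push Not at hcon
      nlinarith
    have hdiv : M'.natAbs ∣ M.natAbs := Int.natAbs_dvd_natAbs.mpr ⟨(k:ℤ) ^ 2, by rw [← hM0]; ring⟩
    have hinj : Set.InjOn (fun z : ℤ × ℤ => (z.1 / (k : ℤ), z.2 / (k : ℤ))) S := by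
      intro z hz w hw h
      obtain ⟨a, b, rfl, -, -⟩ := hmem z hz
      obtain ⟨a', b', rfl, -, -⟩ := hmem w hw
      simp only [Prod.mk.injEq, Int.mul_ediv_cancel_left _ hk0'] at h
      rw [h.1, h.2]
    rw [← Finset.card_image_of_injOn hinj]
    refine (aux_primitive Δ M' hΔ hM'pos hsq _ ?_).trans ?_
    · intro w hw
      rw [Finset.mem_image] at hw
      obtain ⟨z, hz, rfl⟩ := hw
      obtain ⟨a, b, rfl, hc, hab⟩ := hmem z hz
      simp only [Int.mul_ediv_cancel_left _ hk0']
      refine ⟨?_, hc⟩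
      have : (k:ℤ) ^ 2 ≠ 0 := by positivity
      exact mul_left_cancel₀ this (hab.trans hM0.symm)
    · have := Finset.card_le_card (Nat.divisors_subset_of_dvd (by omega) hdiv)
      omega

lemma aux_binary (Δ M : ℤ) (hΔ : 0 < Δ) (hM : 0 < M)
    (T : Finset (ℤ × ℤ)) (hT : ∀ z ∈ T, z.1 ^ 2 + Δ * z.2 ^ 2 = M) :
    T.card ≤ (10 * M.natAbs.divisors.card) * M.natAbs.divisors.card := by
  obtain ⟨a, b, hab, hsq⟩ := Nat.sq_mul_squarefree Δ.natAbs
  have hΔab : Δ = (b:ℤ) ^ 2 * a := by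
    have : ((Δ.natAbs : ℕ) : ℤ) = Δ := Int.natAbs_of_nonneg hΔ.le
    rw [← this, ← hab]; push_cast; rfl
  have hb : (b : ℤ) ≠ 0 := by
    intro h; rw [h] at hΔab; simp at hΔab; omega
  have ha : 0 < (a : ℤ) := by
    rcases Nat.eq_zero_or_pos a with h | h
    · rw [h] at hΔab; simp at hΔab; omega
    · exact_mod_cast h
  have hinj : Set.InjOn (fun z : ℤ × ℤ => (z.1, (b:ℤ) * z.2)) T := by
    intro z hz w hw h
    simp only [Prod.mk.injEq] at h
    exact Prod.ext h.1 (mul_left_cancel₀ hb h.2)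
  rw [← Finset.card_image_of_injOn hinj]
  refine aux_squarefree a M ha hM (Int.squarefree_natCast.mpr hsq) _ ?_
  intro w hw
  rw [Finset.mem_image] at hw
  obtain ⟨z, hz, rfl⟩ := hw
  simp only
  rw [← hT z hz, hΔab]; ring

/-! ### Reduction theory -/

/-- Second leading minor. -/
def mTwo (B : Matrix (Fin 4) (Fin 4) ℤ) : ℤ := B 0 0 * B 1 1 - B 0 1 ^ 2

/-- Third leading minor. -/
def mThree (B : Matrix (Fin 4) (Fin 4) ℤ) : ℤ :=
  B 0 0 * (B 1 1 * B 2 2 - B 1 2 ^ 2) - B 0 1 * (B 0 1 * B 2 2 - B 1 2 * B 0 2)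
    + B 0 2 * (B 0 1 * B 1 2 - B 1 1 * B 0 2)

/-- Off-diagonal entry of the bordered minors. -/
def mOff (B : Matrix (Fin 4) (Fin 4) ℤ) : ℤ :=
  B 0 0 * (B 1 1 * B 2 3 - B 1 3 * B 1 2) - B 0 1 * (B 0 1 * B 2 3 - B 1 3 * B 0 2)
    + B 0 3 * (B 0 1 * B 1 2 - B 1 1 * B 0 2)

/-- Second diagonal entry of the bordered minors. -/
def mLast (B : Matrix (Fin 4) (Fin 4) ℤ) : ℤ :=
  B 0 0 * (B 1 1 * B 3 3 - B 1 3 ^ 2) - B 0 1 * (B 0 1 * B 3 3 - B 1 3 * B 0 3)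
    + B 0 3 * (B 0 1 * B 1 3 - B 1 1 * B 0 3)

lemma aux_symm {B : Matrix (Fin 4) (Fin 4) ℤ} (h : IsGram B) :
    B 1 0 = B 0 1 ∧ B 2 0 = B 0 2 ∧ B 3 0 = B 0 3 ∧ B 2 1 = B 1 2 ∧ B 3 1 = B 1 3 ∧
      B 3 2 = B 2 3 :=
  ⟨h.1.apply 0 1, h.1.apply 0 2, h.1.apply 0 3, h.1.apply 1 2, h.1.apply 1 3, h.1.apply 2 3⟩

lemma aux_det {B : Matrix (Fin 4) (Fin 4) ℤ} (h : IsGram B) :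
    mThree B * mLast B - mOff B ^ 2 = mTwo B * B.det := by
  obtain ⟨h1, h2, h3, h4, h5, h6⟩ := aux_symm h
  have hdet : B.det = B 0 0 * (B 1 1 * (B 2 2 * B 3 3 - B 2 3 ^ 2)
        - B 1 2 * (B 1 2 * B 3 3 - B 2 3 * B 1 3) + B 1 3 * (B 1 2 * B 2 3 - B 2 2 * B 1 3))
      - B 0 1 * (B 0 1 * (B 2 2 * B 3 3 - B 2 3 ^ 2)
        - B 1 2 * (B 0 2 * B 3 3 - B 2 3 * B 0 3) + B 1 3 * (B 0 2 * B 2 3 - B 2 2 * B 0 3))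
      + B 0 2 * (B 0 1 * (B 1 2 * B 3 3 - B 2 3 * B 1 3)
        - B 1 1 * (B 0 2 * B 3 3 - B 2 3 * B 0 3) + B 1 3 * (B 0 2 * B 1 3 - B 1 2 * B 0 3))
      - B 0 3 * (B 0 1 * (B 1 2 * B 2 3 - B 2 2 * B 1 3)
        - B 1 1 * (B 0 2 * B 2 3 - B 2 2 * B 0 3) + B 1 2 * (B 0 2 * B 1 3 - B 1 2 * B 0 3)) := by
    have hs : ∀ i j, B i j = B j i := fun i j => h.1.apply j i
    rw [Matrix.det_succ_row_zero, Fin.sum_univ_four]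
    simp only [Matrix.det_fin_three, Matrix.submatrix_apply]
    have e1 : (Fin.succ (0 : Fin 3) : Fin 4) = 1 := rfl
    have e2 : (Fin.succ (1 : Fin 3) : Fin 4) = 2 := rfl
    have e3 : (Fin.succ (2 : Fin 3) : Fin 4) = 3 := rfl
    have a00 : (Fin.succAbove (0 : Fin 4) (0 : Fin 3)) = 1 := rfl
    have a01 : (Fin.succAbove (0 : Fin 4) (1 : Fin 3)) = 2 := rfl
    have a02 : (Fin.succAbove (0 : Fin 4) (2 : Fin 3)) = 3 := rfl
    have a10 : (Fin.succAbove (1 : Fin 4) (0 : Fin 3)) = 0 := rfl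
    have a11 : (Fin.succAbove (1 : Fin 4) (1 : Fin 3)) = 2 := rfl
    have a12 : (Fin.succAbove (1 : Fin 4) (2 : Fin 3)) = 3 := rfl
    have a20 : (Fin.succAbove (2 : Fin 4) (0 : Fin 3)) = 0 := rfl
    have a21 : (Fin.succAbove (2 : Fin 4) (1 : Fin 3)) = 1 := rfl
    have a22 : (Fin.succAbove (2 : Fin 4) (2 : Fin 3)) = 3 := rfl
    have a30 : (Fin.succAbove (3 : Fin 4) (0 : Fin 3)) = 0 := rfl
    have a31 : (Fin.succAbove (3 : Fin 4) (1 : Fin 3)) = 1 := rfl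
    have a32 : (Fin.succAbove (3 : Fin 4) (2 : Fin 3)) = 2 := rfl
    simp only [e1, e2, e3, a00, a01, a02, a10, a11, a12, a20, a21, a22, a30, a31, a32,
      h1, h2, h3, h4, h5, h6]
    have p0 : ((0 : Fin 4) : ℕ) = 0 := rfl
    have p1 : ((1 : Fin 4) : ℕ) = 1 := rfl
    have p2 : ((2 : Fin 4) : ℕ) = 2 := rfl
    have p3 : ((3 : Fin 4) : ℕ) = 3 := rfl
    rw [p0, p1, p2, p3]
    ring
  rw [hdet]
  unfold mThree mLast mOff mTwo
  ring

lemma aux_pos {B : Matrix (Fin 4) (Fin 4) ℤ} (h : IsGram B) (hp : PosDefQF B) :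
    0 < B 0 0 ∧ 0 < mTwo B ∧ 0 < mThree B ∧ 0 < B.det := by
  obtain ⟨h1, h2, h3, h4, h5, h6⟩ := aux_symm h
  refine ⟨?_, ?_, ?_, ?_⟩
  · have := (hp.submatrix (e := (![0] : Fin 1 → Fin 4)) (by decide)).det_pos
    rw [Matrix.det_fin_one] at this
    simpa using this
  · have := (hp.submatrix (e := (![0, 1] : Fin 2 → Fin 4)) (by decide)).det_pos
    rw [Matrix.det_fin_two] at this
    simp [h1] at this
    unfold mTwo
    rw [← sub_pos] at this
    have h' : (0 : ℝ) < ((B 0 0 * B 1 1 - B 0 1 ^ 2 : ℤ) : ℝ) := by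
      push_cast
      nlinarith
    exact_mod_cast h'
  · have := (hp.submatrix (e := (![0, 1, 2] : Fin 3 → Fin 4)) (by decide)).det_pos
    rw [Matrix.det_fin_three] at this
    have h' : (0 : ℝ) < ((mThree B : ℤ) : ℝ) := by
      unfold mThree
      push_cast
      simp [h1, h2, h4] at this
      linarith
    exact_mod_cast h'
  · have := hp.det_pos
    have e : (B.map (Int.cast : ℤ → ℝ)).det = ((B.det : ℤ) : ℝ) := by
      have := (Int.castRingHom ℝ).map_det B
      simpa using this.symm
    rw [e] at this
    exact_mod_cast this

lemma aux_two_Q {B : Matrix (Fin 4) (Fin 4) ℤ} (h : IsGram B) (x : Fin 4 → ℤ) :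
    2 * Qval B x = x ⬝ᵥ (B.mulVec x) := by
  obtain ⟨h1, h2, h3, h4, h5, h6⟩ := aux_symm h
  have d : ∀ i, 2 * (B i i / 2) = B i i := fun i => Int.mul_ediv_cancel' (h.2 i)
  have i0 : (Finset.Ioi (0 : Fin 4)) = {1, 2, 3} := by decide
  have i1 : (Finset.Ioi (1 : Fin 4)) = {2, 3} := by decide
  have i2 : (Finset.Ioi (2 : Fin 4)) = {3} := by decide
  have i3 : (Finset.Ioi (3 : Fin 4)) = ∅ := by decide
  simp [Qval, Matrix.mulVec, dotProduct, Fin.sum_univ_four, i0, i1, i2, i3, h1, h2, h3, h4, h5, h6]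
  linear_combination x 0 ^ 2 * d 0 + x 1 ^ 2 * d 1 + x 2 ^ 2 * d 2 + x 3 ^ 2 * d 3

/-- Being equivalent to `A` for our purposes. -/
def Good (A B : Matrix (Fin 4) (Fin 4) ℤ) : Prop :=
  IsGram B ∧ PosDefQF B ∧ B.det = A.det ∧ ∀ n, repCount B n = repCount A n

lemma aux_good {A B : Matrix (Fin 4) (Fin 4) ℤ} (h : Good A B) (V W : Matrix (Fin 4) (Fin 4) ℤ)
    (hVW : V * W = 1) (hd : V.det ^ 2 = 1) : Good A (V.transpose * B * V) := by
  obtain ⟨hG, hp, hdet, hr⟩ := h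
  have hWV : W * V = 1 := mul_eq_one_comm.mp hVW
  have hdot : ∀ x : Fin 4 → ℤ, x ⬝ᵥ ((V.transpose * B * V).mulVec x) =
      (V.mulVec x) ⬝ᵥ (B.mulVec (V.mulVec x)) := by
    intro x
    rw [← Matrix.mulVec_mulVec, ← Matrix.mulVec_mulVec, Matrix.dotProduct_mulVec,
      Matrix.vecMul_transpose]
  have hG' : IsGram (V.transpose * B * V) := by
    constructor
    · unfold Matrix.IsSymm
      rw [Matrix.transpose_mul, Matrix.transpose_mul, Matrix.transpose_transpose, hG.1.eq,
        Matrix.mul_assoc]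
    · intro i
      have h1 := hdot (Pi.single i 1)
      rw [← aux_two_Q hG] at h1
      have h2 : (Pi.single i 1 : Fin 4 → ℤ) ⬝ᵥ ((V.transpose * B * V).mulVec (Pi.single i 1))
          = (V.transpose * B * V) i i := by simp
      rw [← h2, h1]
      exact dvd_mul_right _ _
  have hQ : ∀ x : Fin 4 → ℤ, Qval (V.transpose * B * V) x = Qval B (V.mulVec x) := by
    intro x
    have h1 := aux_two_Q hG' x
    rw [hdot, ← aux_two_Q hG] at h1
    omega
  refine ⟨hG', ?_, ?_, ?_⟩
  · unfold PosDefQF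
    have e : (V.transpose * B * V).map (Int.cast : ℤ → ℝ) =
        (V.map (Int.cast : ℤ → ℝ)).conjTranspose * (B.map (Int.cast : ℤ → ℝ)) *
          (V.map (Int.cast : ℤ → ℝ)) := by
      have := Matrix.map_mul (L := V.transpose * B) (M := V) (f := Int.castRingHom ℝ)
      have h2 := Matrix.map_mul (L := V.transpose) (M := B) (f := Int.castRingHom ℝ)
      simp only [Int.coe_castRingHom] at this h2
      rw [this, h2]
      congr 2
    rw [e]
    refine Matrix.PosDef.conjTranspose_mul_mul_same hp ?_
    apply Matrix.mulVec_injective_of_isUnit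
    rw [Matrix.isUnit_iff_isUnit_det]
    have e2 : (V.map (Int.cast : ℤ → ℝ)).det = ((V.det : ℤ) : ℝ) := by
      have := (Int.castRingHom ℝ).map_det V
      simpa using this.symm
    rw [e2, isUnit_iff_ne_zero]
    intro h0
    have : V.det = 0 := by exact_mod_cast h0
    rw [this] at hd
    norm_num at hd
  · rw [Matrix.det_mul, Matrix.det_mul, Matrix.det_transpose, ← hdet]
    linear_combination B.det * hd
  · intro n
    rw [← hr n]
    unfold repCount
    refine Nat.card_congr
      { toFun := fun x => ⟨V.mulVec x.1, by rw [← hQ]; exact x.2⟩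
        invFun := fun x => ⟨W.mulVec x.1, by
          rw [hQ, Matrix.mulVec_mulVec, hVW, Matrix.one_mulVec]; exact x.2⟩
        left_inv := fun x => Subtype.ext (by
          simp only [Matrix.mulVec_mulVec, hWV, Matrix.one_mulVec])
        right_inv := fun x => Subtype.ext (by
          simp only [Matrix.mulVec_mulVec, hVW, Matrix.one_mulVec]) }

lemma aux_round (p q : ℤ) (hp : 0 < p) : ∃ t : ℤ, 4 * (p * t + q) ^ 2 ≤ p ^ 2 := by
  have h1 := Int.emod_add_mul_ediv q p
  have h2 := Int.emod_nonneg q hp.ne'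
  have h3 := Int.emod_lt_of_pos q hp
  by_cases h : 2 * (q % p) ≤ p
  · refine ⟨-(q / p), ?_⟩
    have : p * -(q / p) + q = q % p := by linarith
    rw [this]
    nlinarith
  · push Not at h
    refine ⟨-(q / p) - 1, ?_⟩
    have : p * (-(q / p) - 1) + q = q % p - p := by linarith
    rw [this]
    nlinarith

set_option maxHeartbeats 2000000 in
set_option linter.unusedSimpArgs false in
lemma aux_reduced {A : Matrix (Fin 4) (Fin 4) ℤ} (hG : IsGram A) (hp : PosDefQF A) :
    ∃ B, Good A B ∧ 3 * (B 0 0) ^ 2 ≤ 4 * mTwo B ∧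
      3 * (mTwo B) ^ 2 ≤ 4 * (B 0 0 * mThree B) ∧
      3 * (mThree B) ^ 2 ≤ 4 * (mTwo B * B.det) := by
  have hA : Good A A := ⟨hG, hp, rfl, fun _ => rfl⟩
  obtain ⟨B, hB, hmin⟩ := WellFounded.has_min
    (measure (fun B : Matrix (Fin 4) (Fin 4) ℤ => (B 0 0 * mTwo B * mThree B).toNat)).wf
    {B | Good A B} ⟨A, hA⟩
  have hB' : Good A B := hB
  obtain ⟨hGB, hpB, -, -⟩ := hB'
  obtain ⟨p1, p2, p3, p4⟩ := aux_pos hGB hpB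
  obtain ⟨s1, s2, s3, s4, s5, s6⟩ := aux_symm hGB
  have hmin' : ∀ B', Good A B' → B 0 0 * mTwo B * mThree B ≤ B' 0 0 * mTwo B' * mThree B' := by
    intro B' h'
    obtain ⟨q1, q2, q3, -⟩ := aux_pos h'.1 h'.2.1
    have hq : 0 < B' 0 0 * mTwo B' * mThree B' := by positivity
    have hq' : 0 < B 0 0 * mTwo B * mThree B := by positivity
    have := hmin B' h'
    change ¬ ((B' 0 0 * mTwo B' * mThree B').toNat < (B 0 0 * mTwo B * mThree B).toNat) at this
    omega
  refine ⟨B, hB, ?_, ?_, ?_⟩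
  · obtain ⟨t, ht⟩ := aux_round (B 0 0) (B 0 1) p1
    obtain ⟨V, hVdef⟩ : ∃ V : Matrix (Fin 4) (Fin 4) ℤ, V =
      !![t, 1, 0, 0; 1, 0, 0, 0; 0, 0, 1, 0; 0, 0, 0, 1] := ⟨_, rfl⟩
    have hV : Good A (V.transpose * B * V) := by
      refine aux_good hB V !![0, 1, 0, 0; 1, -t, 0, 0; 0, 0, 1, 0; 0, 0, 0, 1] ?_ ?_
      · rw [hVdef]
        ext i j; fin_cases i <;> fin_cases j <;> simp [Matrix.mul_apply, Fin.sum_univ_four]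
      · simp [hVdef, Matrix.det_succ_row_zero, Fin.sum_univ_succ, Fin.succAbove]
    have key := hmin' _ hV
    have ent : ∀ i j, (V.transpose * B * V) i j =
        ∑ l, (∑ k, V k i * B k l) * V l j := fun i j => by
      simp [Matrix.mul_apply]
    have e1 : (V.transpose * B * V) 0 0 = B 0 0 * t ^ 2 + 2 * B 0 1 * t + B 1 1 := by
      rw [ent, hVdef]
      simp [Fin.sum_univ_four, s1, s2, s3, s4, s5, s6]
      try ring
    have e2 : mTwo (V.transpose * B * V) = mTwo B := by
      unfold mTwo
      simp only [ent]
      rw [hVdef]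
      simp [Fin.sum_univ_four, s1, s2, s3, s4, s5, s6]
      try ring
    have e3 : mThree (V.transpose * B * V) = mThree B := by
      unfold mThree
      simp only [ent]
      rw [hVdef]
      simp [Fin.sum_univ_four, s1, s2, s3, s4, s5, s6]
      try ring
    rw [e1, e2, e3] at key
    have key2 : B 0 0 ≤ B 0 0 * t ^ 2 + 2 * B 0 1 * t + B 1 1 := by
      by_contra hcon
      push Not at hcon
      have hpp : 0 < mTwo B * mThree B := by positivity
      nlinarith [mul_lt_mul_of_pos_right hcon hpp]
    have id : B 0 0 * (B 0 0 * t ^ 2 + 2 * B 0 1 * t + B 1 1) =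
        (B 0 0 * t + B 0 1) ^ 2 + mTwo B := by
      unfold mTwo; ring
    nlinarith [mul_le_mul_of_nonneg_left key2 p1.le]
  · obtain ⟨t, ht⟩ := aux_round (mTwo B) (B 0 0 * B 1 2 - B 0 1 * B 0 2) p2
    obtain ⟨V, hVdef⟩ : ∃ V : Matrix (Fin 4) (Fin 4) ℤ, V =
      !![1, 0, 0, 0; 0, t, 1, 0; 0, 1, 0, 0; 0, 0, 0, 1] := ⟨_, rfl⟩
    have hV : Good A (V.transpose * B * V) := by
      refine aux_good hB V !![1, 0, 0, 0; 0, 0, 1, 0; 0, 1, -t, 0; 0, 0, 0, 1] ?_ ?_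
      · rw [hVdef]
        ext i j; fin_cases i <;> fin_cases j <;> simp [Matrix.mul_apply, Fin.sum_univ_four]
      · simp [hVdef, Matrix.det_succ_row_zero, Fin.sum_univ_succ, Fin.succAbove]
    have key := hmin' _ hV
    have ent : ∀ i j, (V.transpose * B * V) i j =
        ∑ l, (∑ k, V k i * B k l) * V l j := fun i j => by
      simp [Matrix.mul_apply]
    have e1 : (V.transpose * B * V) 0 0 = B 0 0 := by
      rw [ent, hVdef]
      simp [Fin.sum_univ_four, s1, s2, s3, s4, s5, s6]
      try ring
    have e2 : mTwo (V.transpose * B * V) = mTwo B * t ^ 2 + 2 * (B 0 0 * B 1 2 - B 0 1 * B 0 2) * t + (B 0 0 * B 2 2 - B 0 2 ^ 2) := by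
      unfold mTwo
      simp only [ent]
      rw [hVdef]
      simp [Fin.sum_univ_four, s1, s2, s3, s4, s5, s6]
      try ring
    have e3 : mThree (V.transpose * B * V) = mThree B := by
      unfold mThree
      simp only [ent]
      rw [hVdef]
      simp [Fin.sum_univ_four, s1, s2, s3, s4, s5, s6]
      try ring
    rw [e1, e2, e3] at key
    have key2 : mTwo B ≤ mTwo B * t ^ 2 + 2 * (B 0 0 * B 1 2 - B 0 1 * B 0 2) * t + (B 0 0 * B 2 2 - B 0 2 ^ 2) := by
      by_contra hcon
      push Not at hcon
      have hpp : 0 < B 0 0 * mThree B := by positivity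
      nlinarith [mul_lt_mul_of_pos_right hcon hpp]
    have id : mTwo B * (mTwo B * t ^ 2 + 2 * (B 0 0 * B 1 2 - B 0 1 * B 0 2) * t + (B 0 0 * B 2 2 - B 0 2 ^ 2)) =
        (mTwo B * t + (B 0 0 * B 1 2 - B 0 1 * B 0 2)) ^ 2 + B 0 0 * mThree B := by
      unfold mTwo mThree; ring
    nlinarith [mul_le_mul_of_nonneg_left key2 p2.le]
  · obtain ⟨t, ht⟩ := aux_round (mThree B) (mOff B) p3
    obtain ⟨V, hVdef⟩ : ∃ V : Matrix (Fin 4) (Fin 4) ℤ, V =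
      !![1, 0, 0, 0; 0, 1, 0, 0; 0, 0, t, 1; 0, 0, 1, 0] := ⟨_, rfl⟩
    have hV : Good A (V.transpose * B * V) := by
      refine aux_good hB V !![1, 0, 0, 0; 0, 1, 0, 0; 0, 0, 0, 1; 0, 0, 1, -t] ?_ ?_
      · rw [hVdef]
        ext i j; fin_cases i <;> fin_cases j <;> simp [Matrix.mul_apply, Fin.sum_univ_four]
      · simp [hVdef, Matrix.det_succ_row_zero, Fin.sum_univ_succ, Fin.succAbove]
    have key := hmin' _ hV
    have ent : ∀ i j, (V.transpose * B * V) i j =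
        ∑ l, (∑ k, V k i * B k l) * V l j := fun i j => by
      simp [Matrix.mul_apply]
    have e1 : (V.transpose * B * V) 0 0 = B 0 0 := by
      rw [ent, hVdef]
      simp [Fin.sum_univ_four, s1, s2, s3, s4, s5, s6]
      try ring
    have e2 : mTwo (V.transpose * B * V) = mTwo B := by
      unfold mTwo
      simp only [ent]
      rw [hVdef]
      simp [Fin.sum_univ_four, s1, s2, s3, s4, s5, s6]
      try ring
    have e3 : mThree (V.transpose * B * V) = mThree B * t ^ 2 + 2 * mOff B * t + mLast B := by
      unfold mThree mOff mLast
      simp only [ent]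
      rw [hVdef]
      simp [Fin.sum_univ_four, s1, s2, s3, s4, s5, s6]
      try ring
    rw [e1, e2, e3] at key
    have key2 : mThree B ≤ mThree B * t ^ 2 + 2 * mOff B * t + mLast B := by
      by_contra hcon
      push Not at hcon
      have hpp : 0 < B 0 0 * mTwo B := by positivity
      nlinarith [mul_lt_mul_of_pos_right hcon hpp]
    have id : mThree B * (mThree B * t ^ 2 + 2 * mOff B * t + mLast B) =
        (mThree B * t + mOff B) ^ 2 + mTwo B * B.det := by
      linear_combination aux_det hGB
    nlinarith [mul_le_mul_of_nonneg_left key2 p3.le]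

/-! ### Lattice point counts -/

lemma aux_int_count (T : Finset ℤ) (p q R : ℝ) (hp : 0 < p) (hR : 0 ≤ R)
    (h : ∀ t ∈ T, |p * (t : ℝ) + q| ≤ R * p) : (T.card : ℝ) ≤ 2 * R + 1 := by
  have hsub : T ⊆ Finset.Icc ⌈-q / p - R⌉ ⌊-q / p + R⌋ := by
    intro t ht
    have h1 := abs_le.mp (h t ht)
    rw [Finset.mem_Icc, Int.ceil_le, Int.le_floor]
    constructor
    · rw [sub_le_iff_le_add, div_le_iff₀ hp]; nlinarith
    · rw [← sub_le_iff_le_add, le_div_iff₀ hp]; nlinarith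
  have h1 : (T.card : ℝ) ≤ ((Finset.Icc ⌈-q / p - R⌉ ⌊-q / p + R⌋).card : ℝ) := by
    exact_mod_cast Finset.card_le_card hsub
  refine h1.trans ?_
  rw [Int.card_Icc]
  have f1 := Int.floor_le (-q / p + R)
  have f2 := Int.le_ceil (-q / p - R)
  rcases le_total 0 (⌊-q / p + R⌋ + 1 - ⌈-q / p - R⌉) with h0 | h0
  · have : (((⌊-q / p + R⌋ + 1 - ⌈-q / p - R⌉).toNat : ℕ) : ℝ)
        = ((⌊-q / p + R⌋ + 1 - ⌈-q / p - R⌉ : ℤ) : ℝ) := by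
      rw [← Int.cast_natCast, Int.toNat_of_nonneg h0]
    rw [this]
    push_cast
    linarith
  · rw [Int.toNat_of_nonpos h0]
    push_cast
    linarith

lemma aux_fiber {α β : Type*} [DecidableEq β] (T : Finset α) (f : α → β) (c k : ℝ) (hk0 : 0 ≤ k)
    (hk : ∀ b, ((T.filter (fun a => f a = b)).card : ℝ) ≤ k)
    (hc : ((T.image f).card : ℝ) ≤ c) : (T.card : ℝ) ≤ c * k := by
  have h := Finset.card_eq_sum_card_image f T
  have h2 : (T.card : ℝ) = ∑ b ∈ T.image f, ((T.filter (fun a => f a = b)).card : ℝ) := by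
    rw [h]; push_cast; rfl
  rw [h2]
  calc _ ≤ ∑ b ∈ T.image f, k := Finset.sum_le_sum (fun b _ => hk b)
    _ = (T.image f).card * k := by rw [Finset.sum_const, nsmul_eq_mul]
    _ ≤ _ := by gcongr

lemma aux_pair (P : Finset (ℤ × ℤ)) (p q R p' q' r' R' : ℝ) (hp : 0 < p) (hR : 0 ≤ R)
    (hp' : 0 < p') (hR' : 0 ≤ R')
    (h : ∀ z ∈ P, |p * (z.2 : ℝ) + q| ≤ R * p ∧ |p' * (z.1 : ℝ) + (q' * (z.2 : ℝ) + r')| ≤ R' * p') :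
    (P.card : ℝ) ≤ (2 * R + 1) * (2 * R' + 1) := by
  refine aux_fiber P Prod.snd _ _ (by positivity) ?_ ?_
  · intro b
    have hinj : Set.InjOn Prod.fst (P.filter (fun a => a.2 = b) : Set (ℤ × ℤ)) := by
      intro z hz w hw hzw
      simp only [Finset.coe_filter, Set.mem_ofPred_eq] at hz hw
      exact Prod.ext hzw (hz.2.trans hw.2.symm)
    have hinj' : Set.InjOn Prod.fst ((P.filter (fun a => a.2 = b) : Finset (ℤ × ℤ)) :
        Set (ℤ × ℤ)) := by simpa using hinj
    rw [← Finset.card_image_of_injOn hinj']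
    refine aux_int_count _ p' (q' * b + r') R' hp' hR' ?_
    intro t ht
    rw [Finset.mem_image] at ht
    obtain ⟨z, hz, rfl⟩ := ht
    rw [Finset.mem_filter] at hz
    have := (h z hz.1).2
    rwa [hz.2] at this
  · refine aux_int_count _ p q R hp hR ?_
    intro t ht
    rw [Finset.mem_image] at ht
    obtain ⟨z, hz, rfl⟩ := ht
    exact (h z hz).1

/-- The three linear forms in the Jacobi decomposition. -/
def lV (B : Matrix (Fin 4) (Fin 4) ℤ) (x : Fin 4 → ℤ) : ℤ :=
  B 0 0 * x 0 + (B 0 1 * x 1 + (B 0 2 * x 2 + B 0 3 * x 3))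

/-- Second linear form. -/
def lU (B : Matrix (Fin 4) (Fin 4) ℤ) (x : Fin 4 → ℤ) : ℤ :=
  mTwo B * x 1 + (B 0 0 * (B 1 2 * x 2 + B 1 3 * x 3) - B 0 1 * (B 0 2 * x 2 + B 0 3 * x 3))

/-- Third linear form. -/
def lW (B : Matrix (Fin 4) (Fin 4) ℤ) (x : Fin 4 → ℤ) : ℤ := mThree B * x 2 + mOff B * x 3

lemma aux_jacobi {B : Matrix (Fin 4) (Fin 4) ℤ} (h : IsGram B) (x : Fin 4 → ℤ) :
    B 0 0 * mTwo B * (2 * Qval B x) = mTwo B * lV B x ^ 2 + lU B x ^ 2 +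
      B 0 0 * (mThree B * x 2 ^ 2 + 2 * mOff B * x 2 * x 3 + mLast B * x 3 ^ 2) := by
  obtain ⟨h1, h2, h3, h4, h5, h6⟩ := aux_symm h
  rw [aux_two_Q h]
  simp only [Matrix.mulVec, dotProduct, Fin.sum_univ_four, h1, h2, h3, h4, h5, h6]
  unfold lV lU mThree mOff mLast mTwo
  ring

lemma aux_jacobi2 {B : Matrix (Fin 4) (Fin 4) ℤ} (h : IsGram B) (x : Fin 4 → ℤ) :
    mThree B * (mThree B * x 2 ^ 2 + 2 * mOff B * x 2 * x 3 + mLast B * x 3 ^ 2) =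
      lW B x ^ 2 + mTwo B * B.det * x 3 ^ 2 := by
  rw [← aux_det h]
  unfold lW
  ring

lemma aux_bounds {B : Matrix (Fin 4) (Fin 4) ℤ} (h : IsGram B) (hp : PosDefQF B) (N : ℝ)
    (hN : 0 ≤ N) (x : Fin 4 → ℤ) (hx : 2 * ((Qval B x : ℤ) : ℝ) ≤ N) :
    |(lV B x : ℝ)| ≤ √(N / B 0 0) * B 0 0 ∧
    |(lU B x : ℝ)| ≤ √(N / (mTwo B / B 0 0)) * mTwo B ∧
    |(lW B x : ℝ)| ≤ √(N / (mThree B / mTwo B)) * mThree B ∧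
    |(x 3 : ℝ)| ≤ √(N / (B.det / mThree B)) := by
  obtain ⟨p1, p2, p3, p4⟩ := aux_pos h hp
  have j1 : ((B 0 0 * mTwo B * (2 * Qval B x) : ℤ) : ℝ) = ((_ : ℤ) : ℝ) :=
    congrArg _ (aux_jacobi h x)
  have j2 : ((mThree B * (mThree B * x 2 ^ 2 + 2 * mOff B * x 2 * x 3 + mLast B * x 3 ^ 2) : ℤ) : ℝ)
    = ((_ : ℤ) : ℝ) := congrArg _ (aux_jacobi2 h x)
  set F : ℤ := mThree B * x 2 ^ 2 + 2 * mOff B * x 2 * x 3 + mLast B * x 3 ^ 2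
  simp only [Int.cast_mul, Int.cast_add, Int.cast_pow, Int.cast_ofNat] at j1 j2
  have q1 : (0:ℝ) < B 0 0 := by exact_mod_cast p1
  have q2 : (0:ℝ) < mTwo B := by exact_mod_cast p2
  have q3 : (0:ℝ) < mThree B := by exact_mod_cast p3
  have q4 : (0:ℝ) < B.det := by exact_mod_cast p4
  generalize (B 0 0 : ℝ) = a at *
  generalize (mTwo B : ℝ) = m at *
  generalize (mThree B : ℝ) = k at *
  generalize (B.det : ℝ) = D at *
  generalize (lV B x : ℝ) = v at *
  generalize (lU B x : ℝ) = u at *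
  generalize (lW B x : ℝ) = w at *
  generalize ((F : ℤ) : ℝ) = G at *
  generalize (x 3 : ℝ) = z at *
  generalize ((Qval B x : ℤ) : ℝ) = Q at *
  have hG : 0 ≤ G := by
    have : 0 ≤ k * G := by rw [j2]; positivity
    exact nonneg_of_mul_nonneg_right this q3
  have j3 : a * m * (2 * Q) ≤ a * m * N := by gcongr
  have mv : 0 ≤ m * v ^ 2 := by positivity
  have mu : 0 ≤ u ^ 2 := by positivity
  have mG : 0 ≤ a * G := by positivity
  have hGN : G ≤ m * N := by
    have : a * G ≤ a * (m * N) := by linarith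
    exact le_of_mul_le_mul_left this q1
  have hkG : k * G ≤ k * (m * N) := by gcongr
  have mw : 0 ≤ w ^ 2 := by positivity
  have mz : 0 ≤ m * D * z ^ 2 := by positivity
  refine ⟨?_, ?_, ?_, ?_⟩
  · apply abs_le_of_sq_le_sq _ (by positivity)
    rw [mul_pow, Real.sq_sqrt (by positivity)]
    have e : N / a * a ^ 2 = a * N := by field_simp
    rw [e]
    have : m * v ^ 2 ≤ m * (a * N) := by linarith
    exact le_of_mul_le_mul_left this q2
  · apply abs_le_of_sq_le_sq _ (by positivity)
    rw [mul_pow, Real.sq_sqrt (by positivity)]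
    have e : N / (m / a) * m ^ 2 = a * m * N := by field_simp
    rw [e]
    linarith
  · apply abs_le_of_sq_le_sq _ (by positivity)
    rw [mul_pow, Real.sq_sqrt (by positivity)]
    have e : N / (k / m) * k ^ 2 = k * (m * N) := by field_simp
    rw [e]
    linarith
  · apply abs_le_of_sq_le_sq _ (by positivity)
    rw [Real.sq_sqrt (by positivity), le_div_iff₀ (by positivity), mul_div_assoc',
      div_le_iff₀ q3]
    have : m * (z ^ 2 * D) ≤ m * (N * k) := by linarith
    exact le_of_mul_le_mul_left this q2

lemma aux_proj {B : Matrix (Fin 4) (Fin 4) ℤ} (h : IsGram B) (hp : PosDefQF B) (N : ℝ)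
    (hN : 0 ≤ N) (F : Finset (Fin 4 → ℤ)) (hF : ∀ x ∈ F, 2 * ((Qval B x : ℤ) : ℝ) ≤ N) :
    ((F.image (fun x => (x 2, x 3))).card : ℝ) ≤
      (2 * √(N / (B.det / mThree B)) + 1) * (2 * √(N / (mThree B / mTwo B)) + 1) := by
  obtain ⟨p1, p2, p3, p4⟩ := aux_pos h hp
  refine aux_pair _ 1 0 _ (mThree B) (mOff B) 0 _ one_pos (by positivity)
    (by exact_mod_cast p3) (by positivity) ?_
  intro z hz
  rw [Finset.mem_image] at hz
  obtain ⟨x, hx, rfl⟩ := hz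
  obtain ⟨-, -, b3, b4⟩ := aux_bounds h hp N hN x (hF x hx)
  constructor
  · simpa using b4
  · unfold lW at b3
    push_cast at b3
    simpa using b3

lemma aux_total {B : Matrix (Fin 4) (Fin 4) ℤ} (h : IsGram B) (hp : PosDefQF B) (N : ℝ)
    (hN : 0 ≤ N) (F : Finset (Fin 4 → ℤ)) (hF : ∀ x ∈ F, 2 * ((Qval B x : ℤ) : ℝ) ≤ N) :
    (F.card : ℝ) ≤
      ((2 * √(N / (B.det / mThree B)) + 1) * (2 * √(N / (mThree B / mTwo B)) + 1)) *
      ((2 * √(N / (mTwo B / B 0 0)) + 1) * (2 * √(N / B 0 0) + 1)) := by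
  obtain ⟨p1, p2, p3, p4⟩ := aux_pos h hp
  refine aux_fiber F (fun x => (x 2, x 3)) _ _ (by positivity) ?_ (aux_proj h hp N hN F hF)
  rintro ⟨y, z⟩
  have hinj : Set.InjOn (fun x : Fin 4 → ℤ => (x 0, x 1))
      ((F.filter (fun x => (x 2, x 3) = (y, z)) : Finset (Fin 4 → ℤ)) : Set (Fin 4 → ℤ)) := by
    intro s hs t ht hst
    simp only [Finset.coe_filter, Set.mem_ofPred_eq, Prod.mk.injEq] at hs ht hst
    ext i
    fin_cases i
    · exact hst.1
    · exact hst.2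
    · exact hs.2.1.trans ht.2.1.symm
    · exact hs.2.2.trans ht.2.2.symm
  rw [← Finset.card_image_of_injOn hinj]
  refine aux_pair _ (mTwo B)
    (B 0 0 * (B 1 2 * y + B 1 3 * z) - B 0 1 * (B 0 2 * y + B 0 3 * z)) _
    (B 0 0) (B 0 1) (B 0 2 * y + B 0 3 * z) _
    (by exact_mod_cast p2) (by positivity) (by exact_mod_cast p1) (by positivity) ?_
  intro w hw
  rw [Finset.mem_image] at hw
  obtain ⟨x, hx, rfl⟩ := hw
  rw [Finset.mem_filter] at hx
  obtain ⟨b1, b2, -, -⟩ := aux_bounds h hp N hN x (hF x hx.1)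
  have e := hx.2
  simp only [Prod.mk.injEq] at e
  unfold lV at b1
  unfold lU at b2
  push_cast at b1 b2
  rw [e.1, e.2] at b1 b2
  exact ⟨b2, b1⟩

lemma aux_level {B : Matrix (Fin 4) (Fin 4) ℤ} (h : IsGram B) (hp : PosDefQF B) (X K : ℝ)
    (hX : 0 ≤ X) (n : ℕ) (hn : (n : ℝ) ≤ X) (hK1 : 1 ≤ K)
    (hK : ∀ M : ℤ, 0 < M → (M : ℝ) ≤ 2 * X * (B 0 0 * mTwo B) →
      (((10 * M.natAbs.divisors.card) * M.natAbs.divisors.card : ℕ) : ℝ) ≤ K)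
    (F : Finset (Fin 4 → ℤ)) (hF : ∀ x ∈ F, Qval B x = (n : ℤ)) :
    (F.card : ℝ) ≤
      ((2 * √(2 * X / (B.det / mThree B)) + 1) * (2 * √(2 * X / (mThree B / mTwo B)) + 1)) * K := by
  obtain ⟨p1, p2, p3, p4⟩ := aux_pos h hp
  refine aux_fiber F (fun x => (x 2, x 3)) _ _ (by positivity) ?_
    (aux_proj h hp (2 * X) (by positivity) F (fun x hx => by rw [hF x hx]; push_cast; linarith))
  rintro ⟨y, z⟩
  set S := F.filter (fun x => (x 2, x 3) = (y, z)) with hS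
  have hmem : ∀ x ∈ S, x 2 = y ∧ x 3 = z ∧ Qval B x = (n : ℤ) := by
    intro x hx
    rw [hS, Finset.mem_filter] at hx
    have e := hx.2
    simp only [Prod.mk.injEq] at e
    exact ⟨e.1, e.2, hF x hx.1⟩
  have hinj : Set.InjOn (fun x : Fin 4 → ℤ => (lU B x, lV B x)) (S : Set (Fin 4 → ℤ)) := by
    intro s hs t ht hst
    obtain ⟨s2, s3, -⟩ := hmem s hs
    obtain ⟨t2, t3, -⟩ := hmem t ht
    simp only [Prod.mk.injEq] at hst
    obtain ⟨h1, h2⟩ := hst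
    unfold lU at h1
    rw [s2, s3, t2, t3] at h1
    have e1 : s 1 = t 1 := mul_left_cancel₀ p2.ne' (by linarith)
    unfold lV at h2
    rw [s2, s3, t2, t3, e1] at h2
    have e0 : s 0 = t 0 := mul_left_cancel₀ p1.ne' (by linarith)
    ext i
    fin_cases i
    · exact e0
    · exact e1
    · exact s2.trans t2.symm
    · exact s3.trans t3.symm
  rw [← Finset.card_image_of_injOn hinj]
  set G : ℤ := mThree B * y ^ 2 + 2 * mOff B * y * z + mLast B * z ^ 2 with hG
  set M : ℤ := B 0 0 * mTwo B * (2 * n) - B 0 0 * G with hM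
  set T := S.image (fun x : Fin 4 → ℤ => (lU B x, lV B x)) with hT
  have hTM : ∀ w ∈ T, w.1 ^ 2 + mTwo B * w.2 ^ 2 = M := by
    intro w hw
    rw [hT, Finset.mem_image] at hw
    obtain ⟨x, hx, rfl⟩ := hw
    obtain ⟨x2, x3, hQ⟩ := hmem x hx
    have := aux_jacobi h x
    rw [x2, x3, hQ] at this
    simp only [hM, hG]
    linarith
  rcases lt_trichotomy M 0 with hneg | hzero | hpos
  · have : T = ∅ := by
      apply Finset.eq_empty_of_forall_notMem
      intro w hw
      have := hTM w hw
      nlinarith [sq_nonneg w.1, mul_nonneg p2.le (sq_nonneg w.2)]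
    rw [this]
    simp
    linarith
  · have : T ⊆ {(0, 0)} := by
      intro w hw
      have := hTM w hw
      rw [hzero] at this
      have a1 := sq_nonneg w.1
      have a2 := mul_nonneg p2.le (sq_nonneg w.2)
      have b1 : w.1 ^ 2 = 0 := by linarith
      have b2 : mTwo B * w.2 ^ 2 = 0 := by linarith
      have c1 : w.1 = 0 := by simpa using b1
      have c2 : w.2 = 0 := by simpa [p2.ne'] using b2
      rw [Finset.mem_singleton]
      exact Prod.ext c1 c2
    have h1 : (T.card : ℝ) ≤ 1 := by exact_mod_cast Finset.card_le_card this
    linarith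
  · have hb := aux_binary (mTwo B) M p2 hpos T hTM
    have hb' : (T.card : ℝ) ≤ (((10 * M.natAbs.divisors.card) * M.natAbs.divisors.card : ℕ) : ℝ) := by
      exact_mod_cast hb
    refine hb'.trans (hK M hpos ?_)
    have hG0 : 0 ≤ G := by
      have j := aux_jacobi2 h (![0, 0, y, z])
      simp only [Matrix.cons_val] at j
      rw [← hG] at j
      have : 0 ≤ mThree B * G := by
        rw [j]
        positivity
      exact nonneg_of_mul_nonneg_right this p3
    have hM1 : M ≤ B 0 0 * mTwo B * (2 * n) := by
      have : 0 ≤ B 0 0 * G := by positivity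
      rw [hM]; linarith
    have hM2 : (M : ℝ) ≤ B 0 0 * mTwo B * (2 * n) := by exact_mod_cast hM1
    have q1 : (0:ℝ) < B 0 0 := by exact_mod_cast p1
    have q2 : (0:ℝ) < mTwo B := by exact_mod_cast p2
    calc (M : ℝ) ≤ B 0 0 * mTwo B * (2 * n) := hM2
      _ ≤ B 0 0 * mTwo B * (2 * X) := by gcongr
      _ = _ := by ring

/-! ### Assembly -/

lemma aux_final (X g₁ g₂ g₃ g₄ : ℝ) (hX : 1 ≤ X) (h1 : 1 ≤ g₁) (h2 : 3 / 4 * g₁ ≤ g₂)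
    (h3 : 3 / 4 * g₂ ≤ g₃) (h4 : 3 / 4 * g₃ ≤ g₄) :
    ((2 * √(2 * X / g₄) + 1) * (2 * √(2 * X / g₃) + 1)) *
      (((2 * √(2 * X / g₄) + 1) * (2 * √(2 * X / g₃) + 1)) *
      ((2 * √(2 * X / g₂) + 1) * (2 * √(2 * X / g₁) + 1))) ≤
      100000 * (X ^ 3 * (g₁ * g₂ * g₃ * g₄) ^ (-(3:ℝ) / 4) + X ^ 2) := by
  have p1 : 0 < g₁ := by linarith
  have p2 : 0 < g₂ := by linarith
  have p3 : 0 < g₃ := by linarith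
  have p4 : 0 < g₄ := by linarith
  rcases le_or_gt g₄ X with hc | hc
  · have hbig : ∀ g, 0 < g → g ≤ 64 / 27 * g₄ → 2 * √(2 * X / g) + 1 ≤ 4 * √(2 * X / g) := by
      intro g hg hgg
      have : 1 / 2 ≤ √(2 * X / g) := by
        apply Real.le_sqrt_of_sq_le
        rw [le_div_iff₀ hg]
        linarith
      linarith
    have b1 := hbig g₁ p1 (by linarith)
    have b2 := hbig g₂ p2 (by linarith)
    have b3 := hbig g₃ p3 (by linarith)
    have b4 := hbig g₄ p4 (by linarith)
    have s3 : √(2 * X / g₃) ^ 2 = 2 * X / g₃ := Real.sq_sqrt (by positivity)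
    have s4 : √(2 * X / g₄) ^ 2 = 2 * X / g₄ := Real.sq_sqrt (by positivity)
    have s12 : √(2 * X / g₂) * √(2 * X / g₁) = 2 * X / √(g₁ * g₂) := by
      rw [← Real.sqrt_mul (by positivity)]
      have : 2 * X / g₂ * (2 * X / g₁) = (2 * X) ^ 2 / (g₁ * g₂) := by field_simp
      rw [this, Real.sqrt_div (by positivity), Real.sqrt_sq (by positivity)]
    calc _ ≤ ((4 * √(2 * X / g₄)) * (4 * √(2 * X / g₃))) *
          (((4 * √(2 * X / g₄)) * (4 * √(2 * X / g₃))) *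
          ((4 * √(2 * X / g₂)) * (4 * √(2 * X / g₁)))) := by gcongr
      _ = 4096 * (√(2 * X / g₄) ^ 2 * √(2 * X / g₃) ^ 2 * (√(2 * X / g₂) * √(2 * X / g₁))) := by
          ring
      _ = 32768 * (X ^ 3 * (1 / (g₃ * g₄ * √(g₁ * g₂)))) := by
          rw [s3, s4, s12]
          have : 0 < √(g₁ * g₂) := by positivity
          field_simp
          ring
      _ ≤ 32768 * (X ^ 3 * (4 / 3 * (g₁ * g₂ * g₃ * g₄) ^ (-(3:ℝ) / 4))) := by
          gcongr
          have hD : 0 < g₁ * g₂ * g₃ * g₄ := by positivity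
          have hs : 0 < √(g₁ * g₂) := by positivity
          have e : (-(3:ℝ) / 4) = -(3 / 4) := by ring
          rw [e, Real.rpow_neg hD.le, div_le_iff₀ (by positivity)]
          have hr : 0 < (g₁ * g₂ * g₃ * g₄) ^ ((3:ℝ) / 4) := by positivity
          have key : (g₁ * g₂ * g₃ * g₄) ^ ((3:ℝ) / 4) ≤ 4 / 3 * (g₃ * g₄ * √(g₁ * g₂)) := by
            rw [← pow_le_pow_iff_left₀ hr.le (by positivity) (n := 4) (by norm_num)]
            rw [← Real.rpow_natCast, ← Real.rpow_mul hD.le]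
            have e3 : (3:ℝ) / 4 * ((4:ℕ) : ℝ) = ((3:ℕ) : ℝ) := by norm_num
            rw [e3, Real.rpow_natCast]
            have e4 : (4 / 3 * (g₃ * g₄ * √(g₁ * g₂))) ^ 4
                = 256 / 81 * (g₃ * g₄) ^ 4 * (√(g₁ * g₂) ^ 2) ^ 2 := by ring
            rw [e4, Real.sq_sqrt (by positivity)]
            have hq : 81 / 256 * (g₁ * g₂) ≤ g₃ * g₄ := by
              have a1 : 9 / 16 * g₁ ≤ g₃ := by linarith
              have a2 : 9 / 16 * g₂ ≤ g₄ := by linarith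
              have := mul_le_mul a1 a2 (by positivity) p3.le
              linarith
            have hq' : g₁ * g₂ ≤ 256 / 81 * (g₃ * g₄) := by linarith
            calc (g₁ * g₂ * g₃ * g₄) ^ 3 = (g₁ * g₂) * ((g₁ * g₂) ^ 2 * (g₃ * g₄) ^ 3) := by ring
              _ ≤ (256 / 81 * (g₃ * g₄)) * ((g₁ * g₂) ^ 2 * (g₃ * g₄) ^ 3) := by gcongr
              _ = _ := by ring
          calc (1:ℝ) = ((g₁ * g₂ * g₃ * g₄) ^ ((3:ℝ) / 4))⁻¹ *
                (g₁ * g₂ * g₃ * g₄) ^ ((3:ℝ) / 4) := (inv_mul_cancel₀ hr.ne').symm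
            _ ≤ ((g₁ * g₂ * g₃ * g₄) ^ ((3:ℝ) / 4))⁻¹ * (4 / 3 * (g₃ * g₄ * √(g₁ * g₂))) := by
                gcongr
            _ = _ := by ring
      _ ≤ _ := by
          have t1 : 0 ≤ X ^ 3 * (g₁ * g₂ * g₃ * g₄) ^ (-(3:ℝ) / 4) := by positivity
          have t2 : 0 ≤ X ^ 2 := by positivity
          nlinarith
  · have hsX : 1 ≤ √X := by rw [Real.one_le_sqrt]; exact hX
    have hsm : ∀ g, 27 / 64 ≤ g → 2 * √(2 * X / g) + 1 ≤ 7 * √X := by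
      intro g hg
      have : √(2 * X / g) ≤ 3 * √X := by
        rw [Real.sqrt_le_left (by positivity), mul_pow, Real.sq_sqrt (by positivity),
          div_le_iff₀ (by linarith)]
        nlinarith
      linarith
    have b1 := hsm g₁ (by linarith)
    have b2 := hsm g₂ (by linarith)
    have b3 := hsm g₃ (by linarith)
    have b4 : 2 * √(2 * X / g₄) + 1 ≤ 5 := by
      have : √(2 * X / g₄) ≤ 2 := by
        rw [Real.sqrt_le_left (by positivity), div_le_iff₀ p4]
        nlinarith
      linarith
    have hs4 : √X ^ 2 = X := Real.sq_sqrt (by positivity)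
    calc _ ≤ (5 * (7 * √X)) * ((5 * (7 * √X)) * ((7 * √X) * (7 * √X))) := by gcongr
      _ = 60025 * (√X ^ 2) ^ 2 := by ring
      _ = 60025 * X ^ 2 := by rw [hs4]
      _ ≤ _ := by
          have t1 : 0 ≤ X ^ 3 * (g₁ * g₂ * g₃ * g₄) ^ (-(3:ℝ) / 4) := by positivity
          have t2 : 0 ≤ X ^ 2 := by positivity
          nlinarith

/-- A finite set carrying the representations of `n`. -/
lemma aux_finset (B : Matrix (Fin 4) (Fin 4) ℤ) (n : ℕ) :
    ∃ F : Finset (Fin 4 → ℤ), F.card = repCount B n ∧ ∀ x ∈ F, Qval B x = (n : ℤ) := by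
  by_cases h : {x : Fin 4 → ℤ | Qval B x = (n : ℤ)}.Finite
  · refine ⟨h.toFinset, ?_, ?_⟩
    · have := Set.ncard_eq_toFinset_card _ h
      rw [← this]
      rfl
    · intro x hx
      simpa using hx
  · refine ⟨∅, ?_, by simp⟩
    have : Infinite {x : Fin 4 → ℤ // Qval B x = (n : ℤ)} := Set.infinite_coe_iff.mpr h
    unfold repCount
    rw [Nat.card_eq_zero_of_infinite]
    rfl

lemma aux_K (ε : ℝ) (hε : 0 < ε) : ∃ C : ℝ, 1 ≤ C ∧ ∀ (X D : ℝ), 1 ≤ X → 1 ≤ D →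
    ∀ M : ℤ, 0 < M → (M : ℝ) ≤ 200 * X * D ^ 2 →
    (((10 * M.natAbs.divisors.card) * M.natAbs.divisors.card : ℕ) : ℝ) ≤ C * (X * D) ^ ε := by
  obtain ⟨C₀, hC₀, hd⟩ := aux_divisor_bound (ε / 4) (by positivity)
  have h200 : 1 ≤ (200:ℝ) ^ (ε / 2) := Real.one_le_rpow (by norm_num) (by positivity)
  refine ⟨10 * C₀ ^ 2 * 200 ^ (ε / 2), ?_, ?_⟩
  · have : 1 ≤ C₀ ^ 2 := one_le_pow₀ hC₀
    nlinarith
  intro X D hX hD M hM hMX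
  have h1 := hd M.natAbs (by omega)
  have hMc : ((M.natAbs : ℕ) : ℝ) = (M : ℝ) := by
    rw [← Int.cast_natCast, Int.natAbs_of_nonneg hM.le]
  rw [hMc] at h1
  have hM0 : (0:ℝ) < M := by exact_mod_cast hM
  push_cast
  calc 10 * ((M.natAbs.divisors.card : ℕ) : ℝ) * ((M.natAbs.divisors.card : ℕ) : ℝ)
      ≤ 10 * (C₀ * (M:ℝ) ^ (ε / 4)) * (C₀ * (M:ℝ) ^ (ε / 4)) := by gcongr
    _ = 10 * C₀ ^ 2 * ((M:ℝ) ^ (ε / 4) * (M:ℝ) ^ (ε / 4)) := by ring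
    _ = 10 * C₀ ^ 2 * (M:ℝ) ^ (ε / 2) := by
        rw [← Real.rpow_add hM0]; congr 2; ring
    _ ≤ 10 * C₀ ^ 2 * (200 * (X * D) ^ 2) ^ (ε / 2) := by
        gcongr
        refine hMX.trans ?_
        have : X ≤ X ^ 2 := by nlinarith
        have hD2 : 0 ≤ D ^ 2 := by positivity
        nlinarith [mul_le_mul_of_nonneg_right this hD2]
    _ = 10 * C₀ ^ 2 * 200 ^ (ε / 2) * (X * D) ^ ε := by
        rw [Real.mul_rpow (by norm_num) (by positivity), ← Real.rpow_natCast (X * D),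
          ← Real.rpow_mul (by positivity)]
        have : ((2:ℕ):ℝ) * (ε / 2) = ε := by push_cast; ring
        rw [this]; ring

/-- Mean square bound:
`∑_{1 ≤ n ≤ x} r_R(n)² ≪ (x D(R))^ε (x³ D(R)^{-3/4} + x^{5/2} D(R)^{-1/4} + x²)`. -/
theorem repCount_sq_sum_bound :
    ∀ ε : ℝ, 0 < ε → ∃ C : ℝ, 0 < C ∧
      ∀ (A : Matrix (Fin 4) (Fin 4) ℤ) (x : ℝ),
        IsGram A → PosDefQF A → 1 ≤ x →
        (∑ n ∈ Finset.Icc 1 ⌊x⌋₊, ((repCount A n : ℝ)) ^ 2) ≤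
          C * (x * (A.det : ℝ)) ^ ε *
            (x ^ (3:ℝ) * (A.det : ℝ) ^ (-(3:ℝ)/4) +
             x ^ ((5:ℝ)/2) * (A.det : ℝ) ^ (-(1:ℝ)/4) + x ^ (2:ℝ)) := by

  intro ε hε
  obtain ⟨C, hC, hK⟩ := aux_K ε hε
  refine ⟨C * 100000, by positivity, ?_⟩
  intro A x hG hp hx
  obtain ⟨B, ⟨hGB, hpB, hdet, hrep⟩, r1, r2, r3⟩ := aux_reduced hG hp
  obtain ⟨p1, p2, p3, p4⟩ := aux_pos hGB hpB
  rw [← hdet]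
  simp only [← hrep]
  have q1 : (0:ℝ) < B 0 0 := by exact_mod_cast p1
  have q2 : (0:ℝ) < mTwo B := by exact_mod_cast p2
  have q3 : (0:ℝ) < mThree B := by exact_mod_cast p3
  have q4 : (0:ℝ) < (B.det : ℤ) := by exact_mod_cast p4
  have qD : (1:ℝ) ≤ (B.det : ℤ) := by exact_mod_cast p4
  have q11 : (1:ℝ) ≤ B 0 0 := by exact_mod_cast p1
  have r1' : 3 * (B 0 0 : ℝ) ^ 2 ≤ 4 * mTwo B := by exact_mod_cast r1
  have r2' : 3 * (mTwo B : ℝ) ^ 2 ≤ 4 * (B 0 0 * mThree B) := by exact_mod_cast r2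
  have r3' : 3 * (mThree B : ℝ) ^ 2 ≤ 4 * (mTwo B * ((B.det : ℤ) : ℝ)) := by exact_mod_cast r3
  have g2 : 3 / 4 * (B 0 0 : ℝ) ≤ mTwo B / B 0 0 := by
    rw [le_div_iff₀ q1]; nlinarith
  have g3 : 3 / 4 * ((mTwo B : ℝ) / B 0 0) ≤ mThree B / mTwo B := by
    rw [le_div_iff₀ q2, mul_div_assoc', div_mul_eq_mul_div, div_le_iff₀ q1]; nlinarith
  have g4 : 3 / 4 * ((mThree B : ℝ) / mTwo B) ≤ ((B.det : ℤ) : ℝ) / mThree B := by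
    rw [le_div_iff₀ q3, mul_div_assoc', div_mul_eq_mul_div, div_le_iff₀ q2]; nlinarith
  have hprod : (B 0 0 : ℝ) * (mTwo B / B 0 0) * (mThree B / mTwo B) *
      (((B.det : ℤ) : ℝ) / mThree B) = ((B.det : ℤ) : ℝ) := by field_simp
  have hfin := aux_final x _ _ _ _ hx q11 g2 g3 g4
  rw [hprod] at hfin
  set D : ℝ := ((B.det : ℤ) : ℝ) with hD
  -- the bound for the binary counts
  have hk2 : (mTwo B : ℝ) ≤ 64 / 9 * D := by
    have a3 : 9 / 16 ≤ (mThree B : ℝ) / mTwo B := by linarith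
    have a4 : 27 / 64 ≤ D / mThree B := by linarith
    rw [le_div_iff₀ q2] at a3
    rw [le_div_iff₀ q3] at a4
    linarith
  have hk1 : (B 0 0 : ℝ) ≤ 256 / 27 * D := by
    have : (B 0 0 : ℝ) ≤ 4 / 3 * mTwo B := by nlinarith
    linarith
  have hXD : 1 ≤ (x * D) ^ ε := Real.one_le_rpow (by nlinarith) hε.le
  have hK1 : 1 ≤ C * (x * D) ^ ε := by nlinarith
  have hKK : ∀ M : ℤ, 0 < M → (M : ℝ) ≤ 2 * x * (B 0 0 * mTwo B) →
      (((10 * M.natAbs.divisors.card) * M.natAbs.divisors.card : ℕ) : ℝ) ≤ C * (x * D) ^ ε := by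
    intro M hM hM2
    refine hK x D hx qD M hM (hM2.trans ?_)
    have : (B 0 0 : ℝ) * mTwo B ≤ (256 / 27 * D) * (64 / 9 * D) := by gcongr
    calc 2 * x * (B 0 0 * mTwo B) ≤ 2 * x * ((256 / 27 * D) * (64 / 9 * D)) := by gcongr
      _ = (2 * (256 / 27) * (64 / 9)) * (x * D ^ 2) := by ring
      _ ≤ 200 * (x * D ^ 2) := by gcongr; norm_num
      _ = _ := by ring
  choose F hFc hF using aux_finset B
  set P : ℝ := (2 * √(2 * x / (D / mThree B)) + 1) * (2 * √(2 * x / (mThree B / mTwo B)) + 1)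
    with hP
  set R : ℝ := (2 * √(2 * x / (mTwo B / B 0 0)) + 1) * (2 * √(2 * x / B 0 0) + 1) with hR
  have hP0 : 0 ≤ P := by positivity
  have hx0 : 0 ≤ x := by linarith
  have hle : ∀ n ∈ Finset.Icc 1 ⌊x⌋₊, (n : ℝ) ≤ x := by
    intro n hn
    exact (Nat.le_floor_iff hx0).mp (Finset.mem_Icc.mp hn).2
  have hmax : ∀ n ∈ Finset.Icc 1 ⌊x⌋₊, (repCount B n : ℝ) ≤ P * (C * (x * D) ^ ε) := by
    intro n hn
    rw [← hFc n]
    exact aux_level hGB hpB x _ hx0 n (hle n hn) hK1 hKK (F n) (hF n)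
  have hsum : (∑ n ∈ Finset.Icc 1 ⌊x⌋₊, (repCount B n : ℝ)) ≤ P * R := by
    have hdisj : ((Finset.Icc 1 ⌊x⌋₊ : Finset ℕ) : Set ℕ).PairwiseDisjoint F := by
      intro n _ m _ hnm
      change Disjoint (F n) (F m)
      rw [Finset.disjoint_left]
      intro y hy hy'
      have h1 := hF n y hy
      have h2 := hF m y hy'
      rw [h1] at h2
      exact hnm (by exact_mod_cast h2)
    have hcard := Finset.card_biUnion hdisj
    have e : (∑ n ∈ Finset.Icc 1 ⌊x⌋₊, (repCount B n : ℝ)) =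
        (((Finset.Icc 1 ⌊x⌋₊).biUnion F).card : ℝ) := by
      rw [hcard]
      push_cast
      simp only [hFc]
    rw [e]
    refine aux_total hGB hpB (2 * x) (by positivity) _ ?_
    intro y hy
    rw [Finset.mem_biUnion] at hy
    obtain ⟨n, hn, hy⟩ := hy
    rw [hF n y hy]
    have := hle n hn
    push_cast
    linarith
  have hKpos : 0 ≤ C * (x * D) ^ ε := by linarith
  calc (∑ n ∈ Finset.Icc 1 ⌊x⌋₊, ((repCount B n : ℝ)) ^ 2)
      ≤ ∑ n ∈ Finset.Icc 1 ⌊x⌋₊, (P * (C * (x * D) ^ ε)) * (repCount B n : ℝ) := by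
        refine Finset.sum_le_sum (fun n hn => ?_)
        rw [sq]
        exact mul_le_mul_of_nonneg_right (hmax n hn) (by positivity)
    _ = (P * (C * (x * D) ^ ε)) * ∑ n ∈ Finset.Icc 1 ⌊x⌋₊, (repCount B n : ℝ) := by
        rw [Finset.mul_sum]
    _ ≤ (P * (C * (x * D) ^ ε)) * (P * R) := by gcongr
    _ = (C * (x * D) ^ ε) * (P * (P * R)) := by ring
    _ ≤ (C * (x * D) ^ ε) * (100000 * (x ^ 3 * D ^ (-(3:ℝ) / 4) + x ^ 2)) := by gcongr
    _ = C * 100000 * (x * D) ^ ε * (x ^ (3:ℝ) * D ^ (-(3:ℝ) / 4) + 0 + x ^ (2:ℝ)) := by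
        have e3 : x ^ (3:ℝ) = x ^ 3 := by exact_mod_cast Real.rpow_natCast x 3
        have e2 : x ^ (2:ℝ) = x ^ 2 := by exact_mod_cast Real.rpow_natCast x 2
        rw [e3, e2]
        ring
    _ ≤ _ := by
        gcongr
        positivity
end
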